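/- Let p be a prime, let n ≥ 3 be odd, and let f_0 ∈ ℤ_p be nonzero with v_p(f_0) odd (so in particular p divides f_0). Then the p-adic density, within the set F_{n,max}(f_0,ℤ_p), of the subset of squareful forms equals p^{(1-n)/2}·(1 + p^{-1})^{-1}. -/

import Mathlib

open Polynomial Matrix MeasureTheory
open scoped Classical
noncomputable section
namespace BHS



/-! ### Binary forms and the rings they cut out, over a general base -/

variable (R K : Type) [CommRing R] [Field K] [Algebra R K]

/-- The one-variable polynomial `F(x,1)` of the binary form of degree `n` with
coefficient vector `c` (so `F(x,z) = ∑ c i · x^(n-i) · z^i`), over `K`. -/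
def binPoly (n : ℕ) (c : ℕ → R) : Polynomial K :=
  ∑ i ∈ Finset.range (n + 1), Polynomial.C (algebraMap R K (c i)) * Polynomial.X ^ (n - i)

/-- The étale algebra `K_F = K[x]/(F(x,1))`. -/
abbrev KF (n : ℕ) (c : ℕ → R) : Type := AdjoinRoot (binPoly R K n c)

/-- θ, the image of x in K_F. -/
def θF (n : ℕ) (c : ℕ → R) : KF R K n c := AdjoinRoot.root _

/-- `ζ_i = ∑_{j<i} f_j θ^{i-j}`. -/
def ζF (n : ℕ) (c : ℕ → R) (i : ℕ) : KF R K n c :=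
  ∑ j ∈ Finset.range i, algebraMap R (KF R K n c) (c j) * θF R K n c ^ (i - j)

/-- The ring `R_F`, as the free `R`-submodule of `K_F` with basis `1, ζ_1, …, ζ_{n-1}`
(a subring by Nakagawa's theorem). -/
def RFmod (n : ℕ) (c : ℕ → R) : Submodule R (KF R K n c) :=
  Submodule.span R ({1} ∪ {x | ∃ i, 1 ≤ i ∧ i ≤ n - 1 ∧ x = ζF R K n c i})

/-- The fractional ideal `I_F^k`, as the free `R`-submodule of `K_F` with basis
`1, θ, …, θ^k, ζ_{k+1}, …, ζ_{n-1}`. -/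
def IFmod (n : ℕ) (c : ℕ → R) (k : ℕ) : Submodule R (KF R K n c) :=
  Submodule.span R ({x | ∃ j ≤ k, x = θF R K n c ^ j} ∪
    {x | ∃ i, k + 1 ≤ i ∧ i ≤ n - 1 ∧ x = ζF R K n c i})

/-- `R_F` is the maximal order (the integral closure of `R`) in `K_F`. -/
def IsMaxOrder (n : ℕ) (c : ℕ → R) : Prop :=
  RFmod R K n c = Subalgebra.toSubmodule (integralClosure R (KF R K n c))

/-- `M` is stable under multiplication by `R_F`, i.e. `M` is an `R_F`-submodule of `K_F`. -/
def IsStable (n : ℕ) (c : ℕ → R) (M : Submodule R (KF R K n c)) : Prop :=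
  ∀ ρ ∈ RFmod R K n c, ∀ x ∈ M, ρ * x ∈ M

/-- `M` is an invertible fractional ideal of `R_F`. -/
def IsInvIdeal (n : ℕ) (c : ℕ → R) (M : Submodule R (KF R K n c)) : Prop :=
  IsStable R K n c M ∧
    ∃ N : Submodule R (KF R K n c), IsStable R K n c N ∧ M * N = RFmod R K n c

/-- The principal fractional ideal of `R_F` generated by `α`. -/
def principal (n : ℕ) (c : ℕ → R) (α : KF R K n c) : Submodule R (KF R K n c) :=
  Submodule.span R {α} * RFmod R K n c

/-- `ρ` is a unit of the order `R_F`. -/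
def IsUnitRF (n : ℕ) (c : ℕ → R) (ρ : KF R K n c) : Prop :=
  ρ ∈ RFmod R K n c ∧ ∃ σ ∈ RFmod R K n c, ρ * σ = 1

/-- `#R_F^×[2]`, the number of 2-torsion units of `R_F`. -/
def twoTorsUnitsCount (n : ℕ) (c : ℕ → R) : ℕ :=
  Nat.card {ρ : KF R K n c // ρ ∈ RFmod R K n c ∧ ρ ^ 2 = 1}

/-- The number of 2-torsion elements of the ideal class group `Cl(R_F)`: the number of
invertible fractional ideals of `R_F` whose square is principal, counted modulo
principal fractional ideals. -/
def clTwoCount (n : ℕ) (c : ℕ → R) : ℕ :=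
  Nat.card (Quot (fun (I J : {M : Submodule R (KF R K n c) //
      IsInvIdeal R K n c M ∧
        ∃ α : KF R K n c, IsUnit α ∧ M * M = principal R K n c α}) =>
    ∃ α : KF R K n c, IsUnit α ∧
      (I : Submodule R (KF R K n c)) =
        Submodule.span R {α} * (J : Submodule R (KF R K n c))))

/-- `α ∈ K_F` is totally positive: positive under every real embedding. -/
def TotPos (n : ℕ) (c : ℕ → R) (α : KF R K n c) : Prop :=
  ∀ φ : KF R K n c →+* ℝ, 0 < φ α

/-- The number of 2-torsion elements of the narrow class group `Cl⁺(R_F)`. -/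
def clTwoCountPlus (n : ℕ) (c : ℕ → R) : ℕ :=
  Nat.card (Quot (fun (I J : {M : Submodule R (KF R K n c) //
      IsInvIdeal R K n c M ∧
        ∃ α : KF R K n c, IsUnit α ∧ TotPos R K n c α ∧ M * M = principal R K n c α}) =>
    ∃ α : KF R K n c, IsUnit α ∧ TotPos R K n c α ∧
      (I : Submodule R (KF R K n c)) =
        Submodule.span R {α} * (J : Submodule R (KF R K n c))))

/-- The order of the ideal class group of `R_F`. -/
def clCount (n : ℕ) (c : ℕ → R) : ℕ :=
  Nat.card (Quot (fun (I J : {M : Submodule R (KF R K n c) // IsInvIdeal R K n c M}) =>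
    ∃ α : KF R K n c, IsUnit α ∧
      (I : Submodule R (KF R K n c)) =
        Submodule.span R {α} * (J : Submodule R (KF R K n c))))

/-- The order of the narrow class group of `R_F`. -/
def clCountPlus (n : ℕ) (c : ℕ → R) : ℕ :=
  Nat.card (Quot (fun (I J : {M : Submodule R (KF R K n c) // IsInvIdeal R K n c M}) =>
    ∃ α : KF R K n c, IsUnit α ∧ TotPos R K n c α ∧
      (I : Submodule R (KF R K n c)) =
        Submodule.span R {α} * (J : Submodule R (KF R K n c))))




/-! ### p-adic machinery -/

variable (p : ℕ) [Fact p.Prime]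

instance : MeasurableSpace ℤ_[p] := borel _
instance : BorelSpace ℤ_[p] := ⟨rfl⟩

/-- Haar probability measure on `ℤ_p^n`. -/
def haarP (n : ℕ) : Measure (Fin n → ℤ_[p]) :=
  Measure.addHaarMeasure ⟨⟨Set.univ, isCompact_univ⟩, by rw [interior_univ]; exact Set.univ_nonempty⟩

/-- The `p`-adic density of `A` within `B` (subsets of the coefficient space `ℤ_p^n`). -/
def densIn (n : ℕ) (A B : Set (Fin n → ℤ_[p])) : ℝ :=
  (haarP p n A).toReal / (haarP p n B).toReal

/-- The coefficient vector of the degree-`n` binary form with leading coefficient `f0` and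
remaining coefficients `v`. -/
def consF0 (n : ℕ) (f0 : ℤ_[p]) (v : Fin n → ℤ_[p]) : ℕ → ℤ_[p] :=
  fun j => if j = 0 then f0 else if h : j - 1 < n then v ⟨j - 1, h⟩ else 0

/-- The reduction of the binary form with coefficients `c` modulo `p`, as a polynomial in
two variables `x = X 0`, `z = X 1` over `F_p`. -/
def redForm (n : ℕ) (c : ℕ → ℤ_[p]) : MvPolynomial (Fin 2) (ZMod p) :=
  ∑ i ∈ Finset.range (n + 1),
    MvPolynomial.C (PadicInt.toZMod (c i)) * MvPolynomial.X 0 ^ (n - i) * MvPolynomial.X 1 ^ i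

/-- `F` is squareful over `ℤ_p`: `F ≡ κ·z^{e}·H² (mod p)` with `e > 0`, `κ ∈ F_p^×` and
`H` a monic binary form over `F_p` (hence not divisible by `z`). -/
def SquarefulP (n : ℕ) (c : ℕ → ℤ_[p]) : Prop :=
  ∃ (κ : (ZMod p)ˣ) (e d : ℕ) (H : MvPolynomial (Fin 2) (ZMod p)),
    0 < e ∧ H.IsHomogeneous d ∧ MvPolynomial.coeff (Finsupp.single 0 d) H = 1 ∧
    redForm p n c = MvPolynomial.C (κ : ZMod p) * MvPolynomial.X 1 ^ e * H ^ 2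

/-- `F` is evenly ramified over `ℤ_p`: `F ≡ κ·H² (mod p)` with `κ ∈ F_p^×`. -/
def EvenRamP (n : ℕ) (c : ℕ → ℤ_[p]) : Prop :=
  ∃ (κ : (ZMod p)ˣ) (H : MvPolynomial (Fin 2) (ZMod p)),
    redForm p n c = MvPolynomial.C (κ : ZMod p) * H ^ 2

/-- `F` is primitive over `ℤ_p`: its coefficients generate the unit ideal. -/
def PrimP (n : ℕ) (c : ℕ → ℤ_[p]) : Prop := ∃ i ≤ n, IsUnit (c i)

/-- `F` is separable (of degree `n`) over `ℚ_p`. -/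
def SepDegP (n : ℕ) (c : ℕ → ℤ_[p]) : Prop :=
  (binPoly ℤ_[p] ℚ_[p] n c).Separable ∧ (binPoly ℤ_[p] ℚ_[p] n c).natDegree = n

/-- The determinant of the Sylvester matrix of `F(x,1)` (of formal degree n) and
`F'(x,1)` (of formal degree n-1); it equals `±f_0` times the discriminant of the form. -/
def sylvDet (S : Type) [CommRing S] (n : ℕ) (c : ℕ → S) : S :=
  Matrix.det (Matrix.of (fun (i j : Fin (n + (n - 1))) =>
    if (i : ℕ) < n - 1 then
      (if (i : ℕ) ≤ (j : ℕ) ∧ (j : ℕ) ≤ (i : ℕ) + n then c ((j : ℕ) - (i : ℕ)) else 0)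
    else
      (if (i : ℕ) - (n - 1) ≤ (j : ℕ) ∧ (j : ℕ) ≤ ((i : ℕ) - (n - 1)) + (n - 1) then
        ((n - ((j : ℕ) - ((i : ℕ) - (n - 1))) : ℕ) : S) * c ((j : ℕ) - ((i : ℕ) - (n - 1)))
      else 0)))

/-- The discriminant of the form with coefficients `c` is not divisible by `p²`. -/
def DiscOK (n : ℕ) (c : ℕ → ℤ_[p]) : Prop :=
  ¬ ((p : ℤ_[p]) ^ 2 * c 0 ∣ sylvDet ℤ_[p] n c)

/-- The reduction modulo `p` of the degree-`n` binary form with coefficients `c` is a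
separable binary form over `F_p`. -/
def SepFormModP (n : ℕ) (c : ℕ → ℤ_[p]) : Prop :=
  (∑ i ∈ Finset.range (n + 1),
      Polynomial.C (PadicInt.toZMod (c i)) * (Polynomial.X : Polynomial (ZMod p)) ^ (n - i)).Separable ∧
  n - 1 ≤ (∑ i ∈ Finset.range (n + 1),
      Polynomial.C (PadicInt.toZMod (c i)) * (Polynomial.X : Polynomial (ZMod p)) ^ (n - i)).natDegree

end BHS

namespace BHS

def GoodPair {k : Type} [Field k] (H B : k[X]) : Prop :=
  ∀ P : k[X], Irreducible P → P ^ 2 ∣ H → ¬ P ∣ B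

theorem GoodPair.congr {k : Type} [Field k] {H B B' : k[X]} (h : H ∣ B - B') (g : GoodPair H B) :
    GoodPair H B' := by
  intro P hP h2 hB
  refine g P hP h2 ?_
  have h1 : P ∣ H := (dvd_pow_self P two_ne_zero).trans h2
  have : B = (B - B') + B' := by ring
  rw [this]
  exact dvd_add (h1.trans h) hB

theorem card_LT {k : Type} [Field k] [Fintype k] (n : ℕ) :
    Nat.card {B : k[X] // B.degree < n} = Fintype.card k ^ n := by
  have e : {B : k[X] // B.degree < n} ≃ degreeLT k n :=
    Equiv.subtypeEquivRight (fun B => by rw [mem_degreeLT])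
  rw [Nat.card_congr (e.trans (degreeLTEquiv k n).toEquiv)]
  simp [Nat.card_eq_fintype_card]

instance finite_LT {k : Type} [Field k] [Fintype k] (n : ℕ) : Finite {B : k[X] // B.degree < n} := by
  have e : {B : k[X] // B.degree < n} ≃ degreeLT k n :=
    Equiv.subtypeEquivRight (fun B => by rw [mem_degreeLT])
  exact Finite.of_equiv _ (e.trans (degreeLTEquiv k n).toEquiv).symm

abbrev Mon (k : Type) [Field k] (C : k[X] → Prop) (d : ℕ) : Type :=
  {H : k[X] // H.Monic ∧ H.natDegree = d ∧ C H}

abbrev GP (k : Type) [Field k] (C : k[X] → Prop) (d : ℕ) : Type :=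
  {x : k[X] × k[X] // x.1.Monic ∧ x.1.natDegree = d ∧ C x.1 ∧ x.2.degree < d ∧ GoodPair x.1 x.2}

theorem card_Mon_all {k : Type} [Field k] [Fintype k] (d : ℕ) :
    Nat.card (Mon k (fun _ => True) d) = Fintype.card k ^ d := by
  have e : Mon k (fun _ => True) d ≃ {p : k[X] // p.Monic ∧ p.natDegree = d} :=
    Equiv.subtypeEquivRight (fun B => by simp)
  have e2 : degreeLT k d ≃ {B : k[X] // B.degree < d}  :=
    Equiv.subtypeEquivRight (fun B => by rw [mem_degreeLT])
  rw [Nat.card_congr (e.trans ((monicEquivDegreeLT d).trans e2)), card_LT]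

instance finite_Mon {k : Type} [Field k] [Fintype k] (C : k[X] → Prop) (d : ℕ) :
    Finite (Mon k C d) := by
  refine Finite.of_injective (β := {B : k[X] // B.degree < (d+1 : ℕ)})
    (fun H => ⟨H.1, ?_⟩) ?_
  · have := H.2.2.1
    exact (degree_le_natDegree).trans_lt (by rw [this]; exact_mod_cast Nat.lt_succ_self d)
  · intro a b h
    simpa [Subtype.ext_iff] using h

instance finite_GP {k : Type} [Field k] [Fintype k] (C : k[X] → Prop) (d : ℕ) :
    Finite (GP k C d) := by
  refine Finite.of_injective (β := Mon k C d × {B : k[X] // B.degree < d})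
    (fun x => (⟨x.1.1, x.2.1, x.2.2.1, x.2.2.2.1⟩, ⟨x.1.2, x.2.2.2.2.1⟩)) ?_
  intro a b h
  simp only [Prod.mk.injEq, Subtype.mk.injEq] at h
  exact Subtype.ext (Prod.ext h.1 h.2)

theorem max_unique_aux {k : Type} [Field k] {h1 h2 H1 H2 B1 B2 : k[X]}
    (m1 : h1 ≠ 0) (hH : h1 ^ 2 * H1 = h2 ^ 2 * H2) (hB : h1 * B1 = h2 * B2)
    (g1 : GoodPair H1 B1) : h2 ∣ h1 := by
  obtain ⟨a, b, c, hab, ha, hb⟩ := UniqueFactorizationMonoid.exists_reduced_factors h1 m1 h2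
  have hc : c ≠ 0 := by rintro rfl; simp at ha; exact m1 ha.symm
  have hab' : IsCoprime a b := hab.isCoprime
  subst ha hb
  have e1 : a ^ 2 * H1 = b ^ 2 * H2 := by
    apply mul_left_cancel₀ (pow_ne_zero 2 hc)
    linear_combination hH
  have e2 : a * B1 = b * B2 := by
    apply mul_left_cancel₀ hc
    linear_combination hB
  have d1 : b ^ 2 ∣ H1 := (IsCoprime.pow hab'.symm).dvd_of_dvd_mul_left (Dvd.intro _ e1.symm)
  have d2 : b ∣ B1 := hab'.symm.dvd_of_dvd_mul_left (Dvd.intro _ e2.symm)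
  have hb0 : b ≠ 0 := by
    rintro rfl
    have hu : IsUnit a := by simpa [isCoprime_zero_right] using hab'
    have : H1 = 0 := by simpa using d1
    have h3 : B1 = 0 := by simpa using d2
    exact g1 X irreducible_X (by simp [this]) (by simp [h3])
  have hu : IsUnit b := by
    by_contra hnu
    obtain ⟨P, hP, hPb⟩ := WfDvdMonoid.exists_irreducible_factor hnu hb0
    exact g1 P hP ((pow_dvd_pow_of_dvd hPb 2).trans d1) (hPb.trans d2)
  exact mul_dvd_mul_left c (hu.dvd)

theorem max_exists_aux {k : Type} [Field k] {H B : k[X]} (hH : H ≠ 0) :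
    ∃ h H1 B1 : k[X], h.Monic ∧ H = h ^ 2 * H1 ∧ B = h * B1 ∧ GoodPair H1 B1 := by
  let S : Set ℕ := {j | ∃ h : k[X], h.Monic ∧ h ^ 2 ∣ H ∧ h ∣ B ∧ h.natDegree = j}
  have hne : S.Nonempty := ⟨0, 1, monic_one, by simp, by simp, by simp⟩
  have hbd : BddAbove S := by
    refine ⟨H.natDegree, ?_⟩
    rintro j ⟨h, hm, h2, -, rfl⟩
    exact natDegree_le_of_dvd ((dvd_pow_self h two_ne_zero).trans h2) hH
  obtain ⟨h, hm, ⟨H1, e1⟩, ⟨B1, e2⟩, hj⟩ := Nat.sSup_mem hne hbd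
  refine ⟨h, H1, B1, hm, e1, e2, ?_⟩
  intro P hP ⟨H2, hP2⟩ ⟨B2, hPB⟩
  have hl : P.leadingCoeff ≠ 0 := leadingCoeff_ne_zero.mpr hP.ne_zero
  have hmem : (h * (P * C P.leadingCoeff⁻¹)).natDegree ∈ S := by
    have hm2 := monic_mul_leadingCoeff_inv hP.ne_zero
    have hC : (C P.leadingCoeff⁻¹ : k[X]) * C P.leadingCoeff = 1 := by
      rw [← C_mul, inv_mul_cancel₀ hl, C_1]
    refine ⟨_, hm.mul hm2, ?_, ?_, rfl⟩
    · rw [e1, hP2]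
      refine ⟨C P.leadingCoeff ^ 2 * H2, ?_⟩
      linear_combination (-h^2*P^2*H2 * (C P.leadingCoeff⁻¹ * C P.leadingCoeff + 1)) * hC
    · rw [e2, hPB]
      refine ⟨C P.leadingCoeff * B2, ?_⟩
      linear_combination (-h * P * B2) * hC
  have hle := le_csSup hbd hmem
  rw [← hj] at hle
  have hm2 := monic_mul_leadingCoeff_inv hP.ne_zero
  rw [hm.natDegree_mul hm2, natDegree_mul_C (inv_ne_zero hl)] at hle
  have := hP.natDegree_pos
  omega

theorem deg_lt_of_mul {k : Type} [Field k] {h B : k[X]} (hm : h.Monic) {d : ℕ}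
    (hB : (h * B).degree < d) : B.degree < (d - h.natDegree : ℕ) := by
  by_cases hb : B = 0
  · simp [hb]
  rw [degree_mul, degree_eq_natDegree hm.ne_zero, degree_eq_natDegree hb] at hB
  rw [degree_eq_natDegree hb]
  norm_cast at *
  omega

theorem mul_deg_lt {k : Type} [Field k] {h B : k[X]} (hm : h.Monic) {d e : ℕ}
    (hB : B.degree < d) (he : h.natDegree + d ≤ e) : (h * B).degree < e := by
  by_cases hb : B = 0
  · simp [hb]
  rw [degree_mul, degree_eq_natDegree hm.ne_zero, degree_eq_natDegree hb]
  rw [degree_eq_natDegree hb] at hB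
  norm_cast at *
  omega

theorem deg_divByMonic {k : Type} [Field k] {h B : k[X]} (hm : h.Monic) {d : ℕ}
    (hB : B.degree < d) (hd : h.natDegree ≤ d) : (B /ₘ h).degree < (d - h.natDegree : ℕ) := by
  by_cases hlt : B.degree < h.degree
  · rw [(divByMonic_eq_zero_iff hm).mpr hlt]; simp
  apply deg_lt_of_mul hm
  have := modByMonic_add_div B h
  have h3 : h * (B /ₘ h) = B - B %ₘ h := by rw [eq_sub_iff_add_eq, add_comm]; exact this
  rw [h3]
  refine (degree_sub_le _ _).trans_lt (max_lt hB ?_)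
  refine (degree_modByMonic_lt B hm).trans_le ?_
  rw [degree_eq_natDegree hm.ne_zero]
  exact_mod_cast hd

theorem deg_modByMonic {k : Type} [Field k] {h B : k[X]} (hm : h.Monic) :
    (B %ₘ h).degree < (h.natDegree : ℕ) := by
  rw [← degree_eq_natDegree hm.ne_zero]
  exact degree_modByMonic_lt B hm

theorem count_rec {k : Type} [Field k] [Fintype k] (C : k[X] → Prop)
    (hC : ∀ h H : k[X], h.Monic → (C (h ^ 2 * H) ↔ C H)) (d : ℕ) :
    Nat.card (Mon k C d) * Fintype.card k ^ d =
      ∑ j ∈ Finset.range (d / 2 + 1), Fintype.card k ^ (2 * j) * Nat.card (GP k C (d - 2 * j)) := by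
  let Src := Σ j : Fin (d / 2 + 1),
    (Mon k (fun _ => True) j × {B : k[X] // B.degree < (j : ℕ)}) × GP k C (d - 2 * j)
  let φ : Src → Mon k C d × {B : k[X] // B.degree < d} := fun x =>
    (⟨x.2.1.1.1 ^ 2 * x.2.2.1.1, by
        obtain ⟨j, ⟨⟨h, hm, hd, -⟩, ⟨q, hq⟩⟩, ⟨⟨H, B⟩, h1, h2, h3, h4, h5⟩⟩ := x
        dsimp only at *
        refine ⟨(hm.pow 2).mul h1, ?_, (hC _ _ hm).mpr h3⟩
        rw [(hm.pow 2).natDegree_mul h1, hm.natDegree_pow, hd, h2]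
        have := j.2
        omega⟩,
     ⟨x.2.1.1.1 * (x.2.2.1.2 + x.2.2.1.1 * x.2.1.2.1), by
        obtain ⟨j, ⟨⟨h, hm, hd, -⟩, ⟨q, hq⟩⟩, ⟨⟨H, B⟩, h1, h2, h3, h4, h5⟩⟩ := x
        dsimp only at *
        have := j.2
        refine mul_deg_lt hm (d := d - j) ?_ (by omega)
        refine (degree_add_le _ _).trans_lt (max_lt (h4.trans_le ?_) ?_)
        · exact_mod_cast (by omega)
        · exact mul_deg_lt h1 hq (by omega)⟩)
  have hφ : Function.Bijective φ := by
    constructor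
    · rintro ⟨j, ⟨⟨h, hm, hd, _⟩, ⟨q, hq⟩⟩, ⟨⟨H, B⟩, h1, h2, h3, h4, h5⟩⟩
        ⟨j', ⟨⟨h', hm', hd', _⟩, ⟨q', hq'⟩⟩, ⟨⟨H', B'⟩, h1', h2', h3', h4', h5'⟩⟩ hEQ
      simp only [φ, Prod.mk.injEq, Subtype.mk.injEq] at hEQ
      dsimp only at *
      obtain ⟨e1, e2⟩ := hEQ
      have g1 : GoodPair H (B + H * q) := h5.congr ⟨-q, by ring⟩
      have g2 : GoodPair H' (B' + H' * q') := h5'.congr ⟨-q', by ring⟩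
      have d1 := max_unique_aux hm.ne_zero e1 e2 g1
      have d2 := max_unique_aux hm'.ne_zero e1.symm e2.symm g2
      have hh : h = h' := eq_of_monic_of_associated hm hm' (associated_of_dvd_dvd d2 d1)
      subst hh
      have hjj : j = j' := Fin.ext (hd.symm.trans hd')
      subst hjj
      have hHH : H = H' := mul_left_cancel₀ (pow_ne_zero 2 hm.ne_zero) e1
      subst hHH
      have e3 := mul_left_cancel₀ hm.ne_zero e2
      have hdB : B.degree < H.degree := by rw [degree_eq_natDegree h1.ne_zero, h2]; exact h4
      have hdB' : B'.degree < H.degree := by rw [degree_eq_natDegree h1.ne_zero, h2]; exact h4'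
      have hqB := div_modByMonic_unique q B h1 ⟨rfl, hdB⟩
      have hqB' := div_modByMonic_unique q' B' h1 ⟨rfl, hdB'⟩
      rw [e3] at hqB
      have hq1 : q = q' := hqB.1.symm.trans hqB'.1
      have hB1 : B = B' := hqB.2.symm.trans hqB'.2
      subst hq1 hB1
      rfl
    · rintro ⟨⟨H, hm, hd, hCH⟩, ⟨B, hB⟩⟩
      obtain ⟨h, H1, B1, hhm, e1, e2, hg⟩ := max_exists_aux (B := B) hm.ne_zero
      have hm1 : H1.Monic := (hhm.pow 2).of_mul_monic_left (e1 ▸ hm)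
      have hdeg : 2 * h.natDegree + H1.natDegree = d := by
        rw [← hd, e1, (hhm.pow 2).natDegree_mul hm1, hhm.natDegree_pow]
      have hBd := deg_lt_of_mul hhm (e2 ▸ hB)
      refine ⟨⟨⟨h.natDegree, by omega⟩, (⟨h, hhm, rfl, trivial⟩, ⟨B1 /ₘ H1, ?_⟩),
        ⟨(H1, B1 %ₘ H1), hm1, ?_, ?_, ?_, ?_⟩⟩, ?_⟩
      · have := deg_divByMonic hm1 hBd (by omega)
        rwa [show d - h.natDegree - H1.natDegree = h.natDegree by omega] at this
      · dsimp only; omega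
      · exact (hC h H1 hhm).mp (e1 ▸ hCH)
      · have := deg_modByMonic (B := B1) hm1
        dsimp only
        convert this using 2
        omega
      · refine hg.congr ?_
        exact ⟨B1 /ₘ H1, by
          have := modByMonic_add_div B1 H1
          linear_combination - this⟩
      · simp only [φ, Prod.mk.injEq, Subtype.mk.injEq]
        exact ⟨e1.symm, by rw [modByMonic_add_div, e2]⟩
  have hcard := Nat.card_congr (Equiv.ofBijective φ hφ)
  rw [Nat.card_prod, card_LT] at hcard
  rw [← hcard, Nat.card_sigma, ← Fin.sum_univ_eq_sum_range (fun j =>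
    Fintype.card k ^ (2 * j) * Nat.card (GP k C (d - 2 * j)))]
  refine Finset.sum_congr rfl fun j _ => ?_
  rw [Nat.card_prod, Nat.card_prod, card_Mon_all, card_LT]
  ring

theorem count_step {k : Type} [Field k] [Fintype k] (C : k[X] → Prop)
    (hC : ∀ h H : k[X], h.Monic → (C (h ^ 2 * H) ↔ C H)) (d : ℕ) :
    Nat.card (Mon k C (d + 2)) * Fintype.card k ^ (d + 2) =
      Nat.card (GP k C (d + 2)) + Nat.card (Mon k C d) * Fintype.card k ^ (d + 2) := by
  have h1 := count_rec C hC (d + 2)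
  have h2 := count_rec C hC d
  rw [h1, show (d + 2) / 2 + 1 = (d / 2 + 1) + 1 by omega, Finset.sum_range_succ', pow_add _ d 2,
    ← mul_assoc, h2, Finset.sum_mul, add_comm]
  congr 1
  · simp
  · refine Finset.sum_congr rfl fun j _ => ?_
    rw [show d + 2 - 2 * (j + 1) = d - 2 * j by omega]
    ring

theorem count_residue {k : Type} [Field k] [Fintype k] {H : k[X]} (hm : H.Monic) (N : ℕ)
    (hN : H.natDegree ≤ N) (c : k[X]) (Q : k[X] → Prop)
    (hQ : ∀ A B, H ∣ A - B → (Q A → Q B)) :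
    Nat.card {B : k[X] // B.degree < N ∧ Q (B + c)} =
      Fintype.card k ^ (N - H.natDegree) * Nat.card {B : k[X] // B.degree < H.natDegree ∧ Q B} := by
  have hmod : ∀ A : k[X], H ∣ A - A %ₘ H := fun A => ⟨A /ₘ H, by
    have := modByMonic_add_div A H
    linear_combination - this⟩
  have hmod' : ∀ A : k[X], H ∣ A %ₘ H - A := fun A => by
    have := (hmod A).neg_right
    rwa [neg_sub] at this
  rw [← card_LT, ← Nat.card_prod]
  refine Nat.card_congr (Equiv.ofBijective
    (fun B => (⟨B.1 /ₘ H, deg_divByMonic hm B.2.1 hN⟩,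
      ⟨(B.1 + c) %ₘ H, deg_modByMonic hm, hQ _ _ (hmod _) B.2.2⟩)) ⟨?_, ?_⟩)
  · rintro ⟨A, hA, hQA⟩ ⟨B, hB, hQB⟩ h
    simp only [Prod.mk.injEq, Subtype.mk.injEq, add_modByMonic, add_left_inj] at h
    have := modByMonic_add_div A H
    have h2 := modByMonic_add_div B H
    rw [h.1, h.2, h2] at this
    exact Subtype.ext this.symm
  · rintro ⟨⟨q, hq⟩, ⟨r, hr, hQr⟩⟩
    have hr' : r.degree < H.degree := by rw [degree_eq_natDegree hm.ne_zero]; exact hr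
    have hu := div_modByMonic_unique (f := (r - c) %ₘ H + H * q) q ((r - c) %ₘ H) hm
      ⟨rfl, degree_modByMonic_lt _ hm⟩
    refine ⟨⟨(r - c) %ₘ H + H * q, ?_, ?_⟩, ?_⟩
    · refine (degree_add_le _ _).trans_lt (max_lt ((deg_modByMonic hm).trans_le ?_) ?_)
      · exact_mod_cast hN
      · exact mul_deg_lt hm hq (by omega)
    · refine hQ r _ ?_ hQr
      have := (hmod (r - c))
      have e : r - ((r - c) %ₘ H + H * q + c) = (r - c - (r - c) %ₘ H) - H * q := by ring
      rw [e]
      exact dvd_sub this (dvd_mul_right _ _)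
    · simp only [Prod.mk.injEq, Subtype.mk.injEq]
      refine ⟨hu.1, ?_⟩
      rw [add_modByMonic, hu.2, ← add_modByMonic]
      rw [add_modByMonic, sub_modByMonic]
      rw [sub_add_cancel]
      exact (modByMonic_eq_self_iff hm).mpr hr'

/-- pairs `(F, B)` with `F ≠ 0`, both of degree `< n`. -/
abbrev TP (k : Type) [Field k] (C : k[X] → Prop) (A : ℕ → Prop) (n : ℕ) (c : k[X]) : Type :=
  {x : k[X] × k[X] // x.1 ≠ 0 ∧ x.1.degree < n ∧ A x.1.natDegree ∧ C x.1 ∧ x.2.degree < n ∧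
    GoodPair x.1 (x.2 + c)}

theorem goodPair_C_mul {k : Type} [Field k] {H B : k[X]} {a : k} (ha : a ≠ 0) :
    GoodPair (Polynomial.C a * H) B ↔ GoodPair H B := by
  unfold GoodPair
  refine forall_congr' fun P => forall_congr' fun _ => ?_
  rw [IsUnit.dvd_mul_left (isUnit_C.mpr ha.isUnit)]

theorem count_TP {k : Type} [Field k] [Fintype k] (C : k[X] → Prop)
    (hC : ∀ (a : k) (H : k[X]), a ≠ 0 → (C (Polynomial.C a * H) ↔ C H)) (A : ℕ → Prop) (n : ℕ)
    (c : k[X]) :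
    Nat.card (TP k C A n c) = ∑ d ∈ Finset.range n, if A d then
      (Fintype.card k - 1) * (Fintype.card k ^ (n - d) * Nat.card (GP k C d)) else 0 := by
  let Src := Σ d : Fin n, {_u : kˣ // A d} × Σ H : Mon k C d,
    {B : k[X] // B.degree < n ∧ GoodPair H.1 (B + c)}
  let φ : Src → TP k C A n c := fun x =>
    ⟨(Polynomial.C (x.2.1.1 : k) * x.2.2.1.1, x.2.2.2.1), by
      obtain ⟨d, ⟨u, hA⟩, ⟨⟨H, hm, hd, hH⟩, ⟨B, hB, hg⟩⟩⟩ := x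
      dsimp only at *
      refine ⟨mul_ne_zero (by simp) hm.ne_zero, ?_, ?_, (hC _ _ (by simp)).mpr hH, hB,
        (goodPair_C_mul (by simp)).mpr hg⟩
      · rw [degree_C_mul (by simp), degree_eq_natDegree hm.ne_zero, hd]
        exact_mod_cast d.2
      · rwa [natDegree_C_mul (by simp), hd]⟩
  have hφ : Function.Bijective φ := by
    constructor
    · rintro ⟨d, ⟨u, hA⟩, ⟨⟨H, hm, hd, hH⟩, ⟨B, hB, hg⟩⟩⟩
        ⟨d', ⟨u', hA'⟩, ⟨⟨H', hm', hd', hH'⟩, ⟨B', hB', hg'⟩⟩⟩ hEQ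
      simp only [φ, Prod.mk.injEq, Subtype.mk.injEq] at hEQ
      obtain ⟨e1, e2⟩ := hEQ
      subst e2
      have hu : u = u' := by
        have := congrArg leadingCoeff e1
        simpa [leadingCoeff_mul, hm.leadingCoeff, hm'.leadingCoeff, Units.ext_iff] using this
      subst hu
      have hHH : H = H' := mul_left_cancel₀ (by simp) e1
      subst hHH
      have hdd : d = d' := Fin.ext (hd.symm.trans hd')
      subst hdd
      rfl
    · rintro ⟨⟨F, B⟩, h0, hd, hA, hCF, hB, hg⟩
      have hl : F.leadingCoeff ≠ 0 := leadingCoeff_ne_zero.mpr h0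
      have hF : F = Polynomial.C F.leadingCoeff * (F * Polynomial.C F.leadingCoeff⁻¹) := by
        have : (Polynomial.C F.leadingCoeff⁻¹ : k[X]) * Polynomial.C F.leadingCoeff = 1 := by
          rw [← C_mul, inv_mul_cancel₀ hl, C_1]
        linear_combination - F * this
      refine ⟨⟨⟨F.natDegree, ?_⟩, ⟨Units.mk0 F.leadingCoeff hl, hA⟩,
        ⟨⟨F * Polynomial.C F.leadingCoeff⁻¹, monic_mul_leadingCoeff_inv h0, ?_, ?_⟩,
          ⟨B, hB, ?_⟩⟩⟩, ?_⟩
      · rw [degree_eq_natDegree h0] at hd; exact_mod_cast hd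
      · exact natDegree_mul_C (inv_ne_zero hl)
      · rw [hF] at hCF; exact (hC _ _ hl).mp hCF
      · rw [hF] at hg; exact (goodPair_C_mul hl).mp hg
      · simp only [φ, Subtype.mk.injEq, Prod.mk.injEq, Units.val_mk0]
        exact ⟨hF.symm, trivial⟩
  have hfin : ∀ H : k[X], Finite {B : k[X] // B.degree < n ∧ GoodPair H (B + c)} := fun H =>
    Finite.of_injective (β := {B : k[X] // B.degree < n}) (fun x => ⟨x.1, x.2.1⟩)
      (fun a b h => by simpa [Subtype.ext_iff] using h)
  rw [← Nat.card_congr (Equiv.ofBijective φ hφ), Nat.card_sigma,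
    ← Fin.sum_univ_eq_sum_range (fun d => if A d then
      (Fintype.card k - 1) * (Fintype.card k ^ (n - d) * Nat.card (GP k C d)) else 0)]
  refine Finset.sum_congr rfl fun d _ => ?_
  rw [Nat.card_prod]
  split_ifs with hA
  · congr 1
    · rw [Nat.card_congr (Equiv.subtypeUnivEquiv (fun _ => hA)), Nat.card_eq_fintype_card,
        Fintype.card_units]
    · have := Fintype.ofFinite (Mon k C d)
      rw [Nat.card_sigma]
      have e2 : Nat.card (GP k C d) = ∑ H : Mon k C d,
          Nat.card {B : k[X] // B.degree < H.1.natDegree ∧ GoodPair H.1 B} := by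
        have hfin2 : ∀ H : Mon k C d,
          Finite {B : k[X] // B.degree < H.1.natDegree ∧ GoodPair H.1 B} := fun H =>
            Finite.of_injective (β := {B : k[X] // B.degree < H.1.natDegree})
              (fun x => ⟨x.1, x.2.1⟩) (fun a b h => by simpa [Subtype.ext_iff] using h)
        rw [← Nat.card_sigma]
        refine Nat.card_congr
          { toFun := fun x => ⟨⟨x.1.1, x.2.1, x.2.2.1, x.2.2.2.1⟩,
              ⟨x.1.2, by rw [x.2.2.1]; exact x.2.2.2.2.1, x.2.2.2.2.2⟩⟩
            invFun := fun y => ⟨(y.1.1, y.2.1), y.1.2.1, y.1.2.2.1, y.1.2.2.2,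
              y.2.2.1.trans_eq (by rw [y.1.2.2.1]), y.2.2.2⟩
            left_inv := fun x => rfl
            right_inv := fun y => rfl }
      rw [e2, Finset.mul_sum]
      refine Finset.sum_congr rfl fun H _ => ?_
      rw [count_residue H.2.1 n (by rw [H.2.2.1]; exact d.2.le) c (GoodPair H.1)
        (fun A B h g => g.congr h), H.2.2.1]
  · have : IsEmpty {_u : kˣ // A d} := ⟨fun x => hA x.2⟩
    simp

def SqC {k : Type} [Field k] (F : k[X]) : Prop :=
  ∃ (a : k) (G : k[X]), a ≠ 0 ∧ F = Polynomial.C a * G ^ 2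

theorem SqC_scale {k : Type} [Field k] (a : k) (H : k[X]) (ha : a ≠ 0) :
    SqC (Polynomial.C a * H) ↔ SqC H := by
  constructor
  · rintro ⟨b, G, hb, e⟩
    refine ⟨a⁻¹ * b, G, mul_ne_zero (inv_ne_zero ha) hb, ?_⟩
    rw [C_mul, mul_assoc, ← e, ← mul_assoc, ← C_mul, inv_mul_cancel₀ ha, C_1, one_mul]
  · rintro ⟨b, G, hb, e⟩
    exact ⟨a * b, G, mul_ne_zero ha hb, by rw [e, C_mul, mul_assoc]⟩

theorem SqC_sq_mul {k : Type} [Field k] (h H : k[X]) (hm : h.Monic) :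
    SqC (h ^ 2 * H) ↔ SqC H := by
  constructor
  · rintro ⟨a, G, ha, e⟩
    have h1 : h ^ 2 ∣ G ^ 2 := by
      have : h ^ 2 ∣ Polynomial.C a * G ^ 2 := Dvd.intro _ e
      rwa [IsUnit.dvd_mul_left (isUnit_C.mpr ha.isUnit)] at this
    rw [IsIntegrallyClosed.pow_dvd_pow_iff two_ne_zero] at h1
    obtain ⟨G', rfl⟩ := h1
    refine ⟨a, G', ha, mul_left_cancel₀ (pow_ne_zero 2 hm.ne_zero) ?_⟩
    rw [e]; ring
  · rintro ⟨a, G, ha, rfl⟩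
    exact ⟨a, h * G, ha, by ring⟩

theorem SqC_monic {k : Type} [Field k] {H : k[X]} (hm : H.Monic) (h : SqC H) :
    ∃ G : k[X], G.Monic ∧ H = G ^ 2 := by
  obtain ⟨a, G, ha, e⟩ := h
  have hG : G ≠ 0 := by rintro rfl; simp at e; exact hm.ne_zero e
  have hl : G.leadingCoeff ≠ 0 := leadingCoeff_ne_zero.mpr hG
  refine ⟨G * Polynomial.C G.leadingCoeff⁻¹, monic_mul_leadingCoeff_inv hG, ?_⟩
  have h1 := congrArg leadingCoeff e
  rw [hm.leadingCoeff, leadingCoeff_mul, leadingCoeff_pow, leadingCoeff_C] at h1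
  have : a = (G.leadingCoeff⁻¹) ^ 2 := by field_simp; exact h1.symm
  rw [e, this, C_pow]; ring

theorem card_Mon_sq_odd {k : Type} [Field k] (d : ℕ) (hd : Odd d) :
    Nat.card (Mon k SqC d) = 0 := by
  have : IsEmpty (Mon k SqC d) := ⟨fun ⟨H, hm, h1, h2⟩ => by
    obtain ⟨G, hG, rfl⟩ := SqC_monic hm h2
    rw [hG.natDegree_pow] at h1
    obtain ⟨r, hr⟩ := hd
    omega⟩
  simp

theorem card_Mon_sq {k : Type} [Field k] [Fintype k] (m : ℕ) :
    Nat.card (Mon k SqC (2 * m)) = Fintype.card k ^ m := by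
  rw [← card_Mon_all]
  symm
  refine Nat.card_congr (Equiv.ofBijective
    (fun G => ⟨G.1 ^ 2, G.2.1.pow 2, by rw [G.2.1.natDegree_pow, G.2.2.1],
      ⟨1, G.1, one_ne_zero, by simp⟩⟩) ⟨?_, ?_⟩)
  · rintro ⟨G, hG, _⟩ ⟨G', hG', _⟩ h
    simp only [Subtype.mk.injEq] at h ⊢
    rcases sq_eq_sq_iff_eq_or_eq_neg.mp h with h | h
    · exact h
    · have h1 := congrArg leadingCoeff h
      rw [leadingCoeff_neg, hG.leadingCoeff, hG'.leadingCoeff] at h1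
      have : (-1 : k[X]) = 1 := by rw [← C_1, ← C_neg, ← h1]
      rw [h, ← one_mul (-G'), ← this]
      ring_nf
  · rintro ⟨H, hm, hd, hH⟩
    obtain ⟨G, hG, rfl⟩ := SqC_monic hm hH
    rw [hG.natDegree_pow] at hd
    exact ⟨⟨G, hG, by omega, trivial⟩, rfl⟩

theorem sum_GP {k : Type} [Field k] [Fintype k] (C : k[X] → Prop)
    (hC : ∀ h H : k[X], h.Monic → (C (h ^ 2 * H) ↔ C H)) (n N : ℕ) (hN : N + 2 ≤ n) :
    ∑ d ∈ Finset.range (N + 2), Fintype.card k ^ (n - d) * Nat.card (GP k C d) =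
      Fintype.card k ^ n * (Nat.card (Mon k C (N + 1)) + Nat.card (Mon k C N)) := by
  induction N with
  | zero =>
    have h0 := count_rec C hC 0
    have h1 := count_rec C hC 1
    simp at h0 h1
    rw [Finset.sum_range_succ, Finset.sum_range_one, ← h0, ← h1, Nat.sub_zero]
    obtain ⟨n, rfl⟩ := Nat.exists_eq_add_of_le hN
    rw [show 0 + 2 + n - 1 = n + 1 by omega]
    ring
  | succ N ih =>
    rw [Finset.sum_range_succ, ih (by omega)]
    have h2 := count_step C hC N
    obtain ⟨n, rfl⟩ := Nat.exists_eq_add_of_le hN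
    rw [show N + 1 + 2 + n - (N + 2) = n + 1 by omega]
    have h3 : Fintype.card k ^ (n + 1) * Nat.card (GP k C (N + 2)) +
        Fintype.card k ^ (n + 1) * (Nat.card (Mon k C N) * Fintype.card k ^ (N + 2)) =
        Fintype.card k ^ (n + 1) * (Nat.card (Mon k C (N + 2)) * Fintype.card k ^ (N + 2)) := by
      rw [h2]; ring
    rw [show N + 1 + 1 = N + 2 from rfl]
    linear_combination h3

theorem count_final {k : Type} [Field k] [Fintype k] (n : ℕ) (hn : 3 ≤ n) (hodd : Odd n)
    (A : ℕ → Prop) (hA : (∀ d, A d) ∨ (∀ d, A d ↔ d = n - 1)) (c : k[X]) :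
    (Nat.card (TP k SqC A n c) : ℝ) / (Nat.card (TP k (fun _ => True) A n c) : ℝ) =
      ((Fintype.card k : ℝ) ^ ((n - 1) / 2))⁻¹ * (1 + (Fintype.card k : ℝ)⁻¹)⁻¹ := by
  rw [count_TP _ SqC_scale, count_TP _ (fun _ _ _ => Iff.rfl)]
  obtain ⟨m, rfl⟩ : ∃ m, n = 2 * m + 3 := by
    obtain ⟨m, rfl⟩ := hodd
    exact ⟨m - 1, by omega⟩
  have hq : 1 < Fintype.card k := Fintype.one_lt_card
  have hqR : (1 : ℝ) < Fintype.card k := by exact_mod_cast hq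
  have hq1 : ((Fintype.card k - 1 : ℕ) : ℝ) ≠ 0 := by
    have : Fintype.card k - 1 ≠ 0 := by omega
    exact_mod_cast this
  rw [show (2 * m + 3 - 1) / 2 = m + 1 by omega]
  set q := Fintype.card k with hqdef
  rcases hA with hA | hA
  · simp only [hA, if_true, ← Finset.mul_sum]
    have h1 := sum_GP (k := k) _ SqC_sq_mul (2 * m + 3) (2 * m + 1) le_rfl
    have h2 := sum_GP (k := k) (fun _ => True) (fun _ _ _ => Iff.rfl) (2 * m + 3) (2 * m + 1) le_rfl
    rw [show 2 * m + 1 + 2 = 2 * m + 3 by ring, show 2 * m + 1 + 1 = 2 * (m + 1) by ring] at h1 h2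
    rw [← hqdef] at h1 h2
    rw [h1, h2, card_Mon_sq, card_Mon_sq_odd _ (by simp), card_Mon_all, card_Mon_all, ← hqdef]
    push_cast
    generalize ((q - 1 : ℕ) : ℝ) = t at *
    have h0 : (q : ℝ) ≠ 0 := by positivity
    field_simp
    ring
  · have hs : ∀ g : ℕ → ℕ, (∑ d ∈ Finset.range (2 * m + 3), if A d then g d else 0) =
        g (2 * m + 2) := by
      intro g
      rw [Finset.sum_range_succ, if_pos ((hA _).mpr (by omega)), Finset.sum_eq_zero, zero_add]
      intro d hd
      rw [if_neg]
      rw [hA]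
      have := Finset.mem_range.mp hd
      omega
    rw [hs, hs, show 2 * m + 3 - (2 * m + 2) = 1 by omega]
    have h1 := count_step (k := k) _ SqC_sq_mul (2 * m)
    have h2 := count_step (k := k) (fun _ => True) (fun _ _ _ => Iff.rfl) (2 * m)
    rw [card_Mon_sq, show 2 * m + 2 = 2 * (m + 1) by ring, card_Mon_sq] at h1
    rw [card_Mon_all, card_Mon_all] at h2
    rw [← hqdef] at h1 h2
    rw [show 2 * (m + 1) = 2 * m + 2 by ring] at h1
    have h1' : (Nat.card (GP k SqC (2 * m + 2)) : ℝ) =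
      (q : ℝ) ^ (m + 1) * q ^ (2 * m + 2) - q ^ m * q ^ (2 * m + 2) := by
      have : (_ : ℝ) = _ := congrArg (Nat.cast) h1
      push_cast at this
      linarith
    have h2' : (Nat.card (GP k (fun _ => True) (2 * m + 2)) : ℝ) =
      (q : ℝ) ^ (2 * m + 2) * q ^ (2 * m + 2) - q ^ (2 * m) * q ^ (2 * m + 2) := by
      have : (_ : ℝ) = _ := congrArg (Nat.cast) h2
      push_cast at this
      linarith
    push_cast
    rw [h1', h2']
    generalize ((q - 1 : ℕ) : ℝ) = t at *
    have h0 : (q : ℝ) ≠ 0 := by positivity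
    have h3 : (q : ℝ) - 1 ≠ 0 := by linarith
    have h4 : (q : ℝ) + 1 ≠ 0 := by linarith
    have e1 : (q : ℝ) ^ (m + 1) * q ^ (2 * m + 2) - q ^ m * q ^ (2 * m + 2) =
      q ^ m * q ^ (2 * m + 2) * (q - 1) := by ring
    have e2 : (q : ℝ) ^ (2 * m + 2) * q ^ (2 * m + 2) - q ^ (2 * m) * q ^ (2 * m + 2) =
      q ^ (2 * m) * q ^ (2 * m + 2) * ((q - 1) * (q + 1)) := by ring
    rw [e1, e2]
    field_simp
    ring

section prelim
variable {p : ℕ} [Fact p.Prime]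

/-- reduction mod `p` of polynomials -/
abbrev red (g : ℤ_[p][X]) : (ZMod p)[X] := g.map (PadicInt.toZMod (p := p))

theorem toZMod_eq_zero_iff (a : ℤ_[p]) : PadicInt.toZMod a = 0 ↔ (p : ℤ_[p]) ∣ a := by
  rw [← RingHom.mem_ker, PadicInt.ker_toZMod, PadicInt.maximalIdeal_eq_span_p,
    Ideal.mem_span_singleton]

theorem red_eq_zero_iff (g : ℤ_[p][X]) : red g = 0 ↔ ∃ g', g = C (p : ℤ_[p]) * g' := by
  change _ ↔ C (p : ℤ_[p]) ∣ g
  rw [C_dvd_iff_dvd_coeff, Polynomial.ext_iff]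
  simp [toZMod_eq_zero_iff]

theorem toZMod_surj : Function.Surjective (PadicInt.toZMod (p := p)) :=
  ZMod.ringHom_surjective _

theorem red_surj (g : (ZMod p)[X]) : ∃ g', red (p := p) g' = g :=
  Polynomial.map_surjective _ toZMod_surj g

theorem red_eq_iff (g h : ℤ_[p][X]) : red g = red h ↔ ∃ g', g = h + C (p : ℤ_[p]) * g' := by
  rw [← sub_eq_zero, ← Polynomial.map_sub, red_eq_zero_iff]
  constructor <;> rintro ⟨g', h⟩ <;> exact ⟨g', by linear_combination h⟩

theorem primitive_of_red {f : ℤ_[p][X]} (hf : red f ≠ 0) : f.IsPrimitive := by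
  intro r hr
  by_contra hu
  apply hf
  rw [red_eq_zero_iff]
  have : (p : ℤ_[p]) ∣ r := by
    rw [← Ideal.mem_span_singleton, ← PadicInt.maximalIdeal_eq_span_p]
    exact hu
  exact (_root_.map_dvd C this).trans hr

theorem gauss {f : ℤ_[p][X]} (hf : red f ≠ 0) (g : ℤ_[p][X])
    (h : f.map (algebraMap ℤ_[p] ℚ_[p]) ∣ g.map (algebraMap ℤ_[p] ℚ_[p])) : f ∣ g :=
  (primitive_of_red hf).dvd_of_fraction_map_dvd_fraction_map h

theorem prime_Cp : Prime (C (p : ℤ_[p]) : ℤ_[p][X]) := prime_C_iff.mpr PadicInt.prime_p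

theorem local_crit {f g P : ℤ_[p][X]} (hf : red f ≠ 0) (hP : Irreducible (red P))
    (hcrit : ¬ ∃ A B D, f = P ^ 2 * D + C (p : ℤ_[p]) * P * B + C (p : ℤ_[p]) ^ 2 * A)
    (m : ℕ) (a : ℕ → ℤ_[p]) (ha : a m = 1)
    (hdvd : f ∣ ∑ i ∈ Finset.range (m + 1), C (a i) * C (p : ℤ_[p]) ^ (m - i) * g ^ i)
    (e : ℕ) (he : red P ^ e ∣ red f) : red P ^ e ∣ red g := by
  induction e with
  | zero => simp
  | succ e ih =>
    obtain ⟨D0, hD0⟩ := ih ((pow_dvd_pow _ (Nat.le_succ e)).trans he)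
    obtain ⟨C0, hC0⟩ := he
    obtain ⟨D, rfl⟩ := red_surj D0
    obtain ⟨C1, rfl⟩ := red_surj C0
    obtain ⟨E, hE⟩ : ∃ E, f = P ^ (e + 1) * C1 + C (p : ℤ_[p]) * E := by
      rw [← red_eq_iff]; simpa using hC0
    obtain ⟨R, hR⟩ : ∃ R, g = P ^ e * D + C (p : ℤ_[p]) * R := by
      rw [← red_eq_iff]; simpa using hD0
    set W := P * R * C1 - D * E with hW
    have h1 : C1 * P * g - C (p : ℤ_[p]) * W = f * D := by
      rw [hW, hR, hE]; ring
    have h2 : f ∣ C (p : ℤ_[p]) ^ m *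
        ∑ i ∈ Finset.range (m + 1), C (a i) * (C1 * P) ^ (m - i) * W ^ i := by
      have h3 : f ∣ ∑ i ∈ Finset.range (m + 1), C (a i) * C (p : ℤ_[p]) ^ (m - i) *
          (C1 * P) ^ (m - i) * ((C1 * P * g) ^ i - (C (p : ℤ_[p]) * W) ^ i) := by
        refine Finset.dvd_sum fun i _ => Dvd.dvd.mul_left ?_ _
        exact (Dvd.intro _ h1.symm).trans (sub_dvd_pow_sub_pow _ _ i)
      have h4 := dvd_sub (hdvd.mul_left ((C1 * P) ^ m)) h3
      convert h4 using 1
      rw [Finset.mul_sum, Finset.mul_sum, ← Finset.sum_sub_distrib]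
      refine Finset.sum_congr rfl fun i hi => ?_
      obtain ⟨j, rfl⟩ := Nat.exists_eq_add_of_le (Nat.lt_succ_iff.mp (Finset.mem_range.mp hi))
      rw [show i + j - i = j by omega]
      ring
    have h5 : f ∣ ∑ i ∈ Finset.range (m + 1), C (a i) * (C1 * P) ^ (m - i) * W ^ i := by
      obtain ⟨q, hq⟩ := h2
      have hnd : ¬ C (p : ℤ_[p]) ∣ f := fun ⟨x, hx⟩ => hf ((red_eq_zero_iff f).mpr ⟨x, hx⟩)
      have := prime_Cp.pow_dvd_of_dvd_mul_left m hnd (Dvd.intro _ hq)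
      obtain ⟨q', rfl⟩ := this
      refine ⟨q', mul_left_cancel₀ (pow_ne_zero m prime_Cp.ne_zero) ?_⟩
      rw [hq]; ring
    have hpr : Prime (red P) := hP.prime
    have h6 : red P ∣ red W := by
      have h7 : red P ∣ red f := by rw [hC0]; exact (dvd_pow_self _ (Nat.succ_ne_zero e)).mul_right _
      have h8 := h7.trans (_root_.map_dvd (Polynomial.mapRingHom (PadicInt.toZMod (p := p))) h5)
      rw [Finset.sum_range_succ, ha] at h8
      simp only [map_add, map_sum, map_mul, map_pow, coe_mapRingHom] at h8
      simp only [Nat.sub_self, pow_zero, mul_one, C_1, Polynomial.map_one, one_mul] at h8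
      rw [dvd_add_right] at h8
      · exact hpr.dvd_of_dvd_pow h8
      · refine Finset.dvd_sum fun i hi => Dvd.dvd.mul_right (Dvd.dvd.mul_left ?_ _) _
        have := Finset.mem_range.mp hi
        exact (dvd_mul_left _ _).trans (dvd_pow_self _ (by omega))
    have h9 : red P ∣ red D * red E := by
      have : red D * red E = red P * (red R * red C1) - red W := by
        simp only [hW, red, Polynomial.map_sub, Polynomial.map_mul]; ring
      rw [this]
      exact dvd_sub (dvd_mul_right _ _) h6
    rcases hpr.dvd_or_dvd h9 with h | h
    · rw [hD0, pow_succ]; exact mul_dvd_mul_left _ h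
    · rcases Nat.eq_zero_or_pos e with rfl | hpos
      · have h7 : red P ∣ red f := by rw [hC0]; exact (dvd_pow_self _ (Nat.succ_ne_zero _)).mul_right _
        have h8 := h7.trans (_root_.map_dvd (Polynomial.mapRingHom (PadicInt.toZMod (p := p))) hdvd)
        rw [Finset.sum_range_succ, ha] at h8
        simp only [map_add, map_sum, map_mul, map_pow, coe_mapRingHom] at h8
        rw [dvd_add_right] at h8
        · simp only [Nat.sub_self, pow_zero, mul_one, C_1, Polynomial.map_one, one_mul] at h8
          simpa using hpr.dvd_of_dvd_pow h8
        · refine Finset.dvd_sum fun i hi => ?_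
          have := Finset.mem_range.mp hi
          have h0 : (C (p : ℤ_[p])).map (PadicInt.toZMod (p := p)) = 0 := by simp
          rw [h0, zero_pow (by omega)]; simp
      · exfalso
        apply hcrit
        obtain ⟨E0, hE0⟩ := h
        obtain ⟨E1, rfl⟩ := red_surj E0
        obtain ⟨E2, hE2⟩ : ∃ E2, E = P * E1 + C (p : ℤ_[p]) * E2 := by
          rw [← red_eq_iff]; simpa using hE0
        refine ⟨E2, E1, P ^ (e - 1) * C1, ?_⟩
        obtain ⟨e, rfl⟩ := Nat.exists_eq_add_of_le' hpos
        rw [hE, hE2, Nat.add_sub_cancel]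
        ring

end prelim

section alg
variable {p : ℕ} [Fact p.Prime] {n : ℕ} {c : ℕ → ℤ_[p]}

/-- The polynomial `F(x,1)` over `ℤ_p`. -/
def fp (n : ℕ) (c : ℕ → ℤ_[p]) : ℤ_[p][X] :=
  ∑ i ∈ Finset.range (n + 1), C (c i) * X ^ (n - i)

theorem fp_map : (fp n c).map (algebraMap ℤ_[p] ℚ_[p]) = binPoly ℤ_[p] ℚ_[p] n c := by
  simp [fp, binPoly, Polynomial.map_sum]

theorem fp_coeff (k : ℕ) : (fp n c).coeff k = if k ≤ n then c (n - k) else 0 := by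
  simp only [fp, finsetSum_coeff, coeff_C_mul, coeff_X_pow]
  split_ifs with h
  · rw [Finset.sum_eq_single (n - k)]
    · rw [if_pos (by omega), mul_one]
    · intro b hb hne
      rw [Finset.mem_range] at hb
      rw [if_neg (by omega), mul_zero]
    · intro hh; simp at hh
  · refine Finset.sum_eq_zero fun i hi => ?_
    rw [if_neg (by omega), mul_zero]

/-- Lift of `ζ_i` (and of `1` for `i = 0`). -/
def Zp (c : ℕ → ℤ_[p]) (i : ℕ) : ℤ_[p][X] :=
  if i = 0 then 1 else ∑ j ∈ Finset.range i, C (c j) * X ^ (i - j)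

/-- evaluation at `θ` -/
abbrev ev (n : ℕ) (c : ℕ → ℤ_[p]) (g : ℤ_[p][X]) : KF ℤ_[p] ℚ_[p] n c :=
  aeval (θF ℤ_[p] ℚ_[p] n c) g

theorem ev_eq_mk (g : ℤ_[p][X]) :
    ev n c g = AdjoinRoot.mk (binPoly ℤ_[p] ℚ_[p] n c) (g.map (algebraMap ℤ_[p] ℚ_[p])) := by
  rw [← AdjoinRoot.aeval_eq, aeval_map_algebraMap]; rfl

theorem ev_fp : ev n c (fp n c) = 0 := by
  rw [ev_eq_mk, fp_map, AdjoinRoot.mk_self]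

theorem ev_eq_zero_iff (hf : red (fp n c) ≠ 0) (g : ℤ_[p][X]) : ev n c g = 0 ↔ fp n c ∣ g := by
  constructor
  · intro h
    rw [ev_eq_mk, AdjoinRoot.mk_eq_zero, ← fp_map] at h
    exact gauss hf g h
  · rintro ⟨h, rfl⟩
    rw [ev, map_mul]
    rw [show aeval (θF ℤ_[p] ℚ_[p] n c) (fp n c) = 0 from ev_fp, zero_mul]

theorem ev_Zp_zero : ev n c (Zp c 0) = 1 := by simp [ev, Zp]

theorem ev_Zp {i : ℕ} (hi : i ≠ 0) : ev n c (Zp c i) = ζF ℤ_[p] ℚ_[p] n c i := by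
  simp [ev, Zp, hi, ζF, map_sum]

theorem mem_RF (hn : 1 ≤ n) (y : KF ℤ_[p] ℚ_[p] n c) :
    y ∈ RFmod ℤ_[p] ℚ_[p] n c ↔
      ∃ a : ℕ → ℤ_[p], y = ev n c (∑ i ∈ Finset.range n, C (a i) * Zp c i) := by
  have hset : ({1} ∪ {x | ∃ i, 1 ≤ i ∧ i ≤ n - 1 ∧ x = ζF ℤ_[p] ℚ_[p] n c i}) =
      Set.range (fun i : Fin n => ev n c (Zp c i)) := by
    ext x
    simp only [Set.mem_union, Set.mem_singleton_iff, Set.mem_ofPred_eq, Set.mem_range]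
    constructor
    · rintro (rfl | ⟨i, h1, h2, rfl⟩)
      · exact ⟨⟨0, hn⟩, ev_Zp_zero⟩
      · exact ⟨⟨i, by omega⟩, ev_Zp (i := i) (by omega)⟩
    · rintro ⟨⟨i, hi⟩, rfl⟩
      rcases Nat.eq_zero_or_pos i with rfl | h
      · left; exact ev_Zp_zero
      · right; exact ⟨i, h, by omega, ev_Zp (i := i) (by omega)⟩
  rw [RFmod, hset, Submodule.mem_span_range_iff_exists_fun]
  have key : ∀ a : ℕ → ℤ_[p], ev n c (∑ i ∈ Finset.range n, C (a i) * Zp c i) =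
      ∑ i : Fin n, a i • ev n c (Zp c i) := by
    intro a
    rw [Finset.sum_range, ev, map_sum]
    refine Finset.sum_congr rfl fun i _ => ?_
    rw [map_mul, aeval_C, Algebra.smul_def]
  constructor
  · rintro ⟨a, rfl⟩
    refine ⟨fun i => if h : i < n then a ⟨i, h⟩ else 0, ?_⟩
    rw [key]
    simp
  · rintro ⟨a, rfl⟩
    exact ⟨fun i => a i, (key a).symm⟩

theorem integral_step (hf : red (fp n c) ≠ 0) (y : KF ℤ_[p] ℚ_[p] n c) (hy : IsIntegral ℤ_[p] y)
    (g : ℤ_[p][X]) (hg : (p : ℤ_[p]) • y = ev n c g) :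
    ∃ (m : ℕ) (a : ℕ → ℤ_[p]), a m = 1 ∧
      fp n c ∣ ∑ i ∈ Finset.range (m + 1), C (a i) * C (p : ℤ_[p]) ^ (m - i) * g ^ i := by
  obtain ⟨χ, hχ, hχ0⟩ := hy
  refine ⟨χ.natDegree, χ.coeff, hχ, ?_⟩
  rw [← ev_eq_zero_iff hf, ev, map_sum]
  have : ∀ i ∈ Finset.range (χ.natDegree + 1),
      aeval (θF ℤ_[p] ℚ_[p] n c) (C (χ.coeff i) * C (p : ℤ_[p]) ^ (χ.natDegree - i) * g ^ i) =
      ((p : ℤ_[p]) ^ χ.natDegree) • (algebraMap _ _ (χ.coeff i) * y ^ i) := by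
    intro i hi
    have hi' : i ≤ χ.natDegree := Nat.lt_succ_iff.mp (Finset.mem_range.mp hi)
    rw [map_mul, map_mul, map_pow, map_pow, aeval_C, aeval_C]
    rw [show aeval (θF ℤ_[p] ℚ_[p] n c) g = ev n c g from rfl, ← hg, Algebra.smul_def,
      Algebra.smul_def, map_pow]
    conv_rhs => rw [← Nat.sub_add_cancel hi', pow_add]
    ring
  rw [Finset.sum_congr rfl this, ← Finset.smul_sum]
  rw [← aeval_def, aeval_eq_sum_range] at hχ0
  simp only [Algebra.smul_def] at hχ0
  rw [hχ0, smul_zero]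

end alg

section alg
variable {p : ℕ} [Fact p.Prime] {n : ℕ} {c : ℕ → ℤ_[p]}

/-- Dedekind type criterion at finite places. -/
def CritFin (f : ℤ_[p][X]) : Prop := ∀ P : ℤ_[p][X], Irreducible (red P) →
  ¬ ∃ A B D, f = P ^ 2 * D + C (p : ℤ_[p]) * P * B + C (p : ℤ_[p]) ^ 2 * A

/-- Dedekind type criterion at infinity. -/
def CritInf (c : ℕ → ℤ_[p]) : Prop := ¬ ((p : ℤ_[p]) ^ 2 ∣ c 0 ∧ (p : ℤ_[p]) ∣ c 1)

theorem reflect_sum' {R ι : Type*} [CommRing R] (N : ℕ) (s : Finset ι) (h : ι → R[X]) :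
    reflect N (∑ i ∈ s, h i) = ∑ i ∈ s, reflect N (h i) :=
  map_sum (AddMonoidHom.mk' (reflect N) (fun a b => reflect_add a b N)) h s

theorem reflect_pow' {R : Type*} [CommRing R] {N : ℕ} {g : R[X]} (hg : g.natDegree ≤ N) (i : ℕ) :
    reflect (N * i) (g ^ i) = reflect N g ^ i := by
  induction i with
  | zero => simp
  | succ i ih =>
    rw [pow_succ, pow_succ, Nat.mul_succ, reflect_mul _ _ _ hg, ih]
    exact (natDegree_pow_le).trans (by rw [mul_comm]; exact Nat.mul_le_mul_right _ hg)

theorem red_dvd_of_crit {f g : ℤ_[p][X]} (hf : red f ≠ 0) (hcrit : CritFin f)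
    (m : ℕ) (a : ℕ → ℤ_[p]) (ha : a m = 1)
    (hdvd : f ∣ ∑ i ∈ Finset.range (m + 1), C (a i) * C (p : ℤ_[p]) ^ (m - i) * g ^ i) :
    red f ∣ red g := by
  by_cases hg : red g = 0
  · rw [hg]; exact dvd_zero _
  rw [UniqueFactorizationMonoid.dvd_iff_emultiplicity_le hf]
  intro P hP
  obtain ⟨P', rfl⟩ := red_surj P
  exact emultiplicity_le_emultiplicity_iff.2 fun e he =>
    local_crit hf hP.irreducible (hcrit P' hP.irreducible) m a ha hdvd e he

theorem Zp_coeff (i t : ℕ) : (Zp c i).coeff t =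
    if i = 0 then (if t = 0 then 1 else 0) else if 1 ≤ t ∧ t ≤ i then c (i - t) else 0 := by
  unfold Zp
  split_ifs with h1 h2 h3
  · subst h2; simp
  · rw [coeff_one, if_neg h2]
  · simp only [finsetSum_coeff, coeff_C_mul, coeff_X_pow]
    rw [Finset.sum_eq_single (i - t)]
    · rw [if_pos (by omega), mul_one]
    · intro b hb hne
      rw [Finset.mem_range] at hb
      rw [if_neg (by omega), mul_zero]
    · intro hh; simp at hh; omega
  · simp only [finsetSum_coeff, coeff_C_mul, coeff_X_pow]
    refine Finset.sum_eq_zero fun j hj => ?_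
    rw [Finset.mem_range] at hj
    rw [if_neg (by omega), mul_zero]

/-- reflected polynomial of the fractional part at infinity -/
def YR (n : ℕ) (c : ℕ → ℤ_[p]) (i : ℕ) : ℤ_[p][X] :=
  if i = 0 then 1 else - ∑ t ∈ Finset.range (n + 1 - i), C (c (i + t)) * X ^ t

theorem YR_coeff (i t : ℕ) : (YR n c i).coeff t =
    if i = 0 then (if t = 0 then 1 else 0) else if i + t ≤ n then - c (i + t) else 0 := by
  unfold YR
  split_ifs with h1 h2 h3
  · subst h2; simp
  · rw [coeff_one, if_neg h2]
  · simp only [coeff_neg, finsetSum_coeff, coeff_C_mul, coeff_X_pow]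
    rw [Finset.sum_eq_single t]
    · rw [if_pos rfl, mul_one]
    · intro b hb hne
      rw [if_neg (by omega), mul_zero]
    · intro hh; simp at hh; omega
  · simp only [coeff_neg, finsetSum_coeff, coeff_C_mul, coeff_X_pow]
    rw [Finset.sum_eq_zero, neg_zero]
    intro j hj
    rw [Finset.mem_range] at hj
    rw [if_neg (by omega), mul_zero]

theorem YR_natDegree (i : ℕ) : (YR n c i).natDegree ≤ n := by
  rw [natDegree_le_iff_coeff_eq_zero]
  intro N hN
  rw [YR_coeff]
  split_ifs <;> first | omega | rfl

theorem YR_rel {i : ℕ} (hi : i ≤ n) :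
    ∃ q, X ^ n * Zp c i = fp n c * q + reflect n (YR n c i) := by
  by_cases h0 : i = 0
  · subst h0
    refine ⟨0, ?_⟩
    simp [Zp, YR]
  · refine ⟨X ^ i, ?_⟩
    ext k
    rw [coeff_add, coeff_mul_X_pow', mul_comm, coeff_mul_X_pow', coeff_reflect, YR_coeff,
      fp_coeff, Zp_coeff]
    simp only [h0, if_false]
    by_cases hk : k ≤ n
    · rw [revAt_le hk]
      split_ifs <;> first | omega | skip
      all_goals try simp
      all_goals (rw [show n - (k - i) = i + (n - k) by omega]; ring)
    · rw [revAt_eq_self_of_lt (by omega)]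
      split_ifs <;> first | omega | skip
      all_goals try simp
      all_goals (congr 1; omega)

theorem inf_step (hc0 : c 0 ≠ 0) (a : ℕ → ℤ_[p]) (m : ℕ) (b : ℕ → ℤ_[p])
    (hdvd : fp n c ∣ ∑ i ∈ Finset.range (m + 1), C (b i) * C (p : ℤ_[p]) ^ (m - i) *
      (∑ i ∈ Finset.range n, C (a i) * Zp c i) ^ i) :
    reflect n (fp n c) ∣ ∑ i ∈ Finset.range (m + 1), C (b i) * C (p : ℤ_[p]) ^ (m - i) *
      (∑ i ∈ Finset.range n, C (a i) * YR n c i) ^ i := by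
  set g := ∑ i ∈ Finset.range n, C (a i) * Zp c i with hg
  set r := ∑ i ∈ Finset.range n, C (a i) * YR n c i with hr
  have hrd : r.natDegree ≤ n := by
    refine natDegree_sum_le_of_forall_le _ _ fun i _ => ?_
    exact (natDegree_C_mul_le _ _).trans (YR_natDegree i)
  have hr' : ∃ q, X ^ n * g = fp n c * q + reflect n r := by
    have : ∀ i, ∃ q, i < n → X ^ n * Zp c i = fp n c * q + reflect n (YR n c i) := by
      intro i
      by_cases hi : i < n
      · obtain ⟨q, hq⟩ := YR_rel (c := c) hi.le
        exact ⟨q, fun _ => hq⟩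
      · exact ⟨0, fun h => absurd h hi⟩
    choose q hq using this
    refine ⟨∑ i ∈ Finset.range n, C (a i) * q i, ?_⟩
    rw [hg, hr, reflect_sum', Finset.mul_sum, Finset.mul_sum, ← Finset.sum_add_distrib]
    refine Finset.sum_congr rfl fun i hi => ?_
    rw [reflect_C_mul]
    linear_combination C (a i) * hq i (Finset.mem_range.mp hi)
  obtain ⟨q, hq⟩ := hr'
  have hrn : (reflect n r).natDegree ≤ n := by
    rw [natDegree_le_iff_coeff_eq_zero]
    intro N hN
    rw [coeff_reflect, revAt_eq_self_of_lt hN]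
    exact coeff_eq_zero_of_natDegree_lt (lt_of_le_of_lt hrd hN)
  have hfd : (fp n c).natDegree = n := by
    refine natDegree_eq_of_le_of_coeff_ne_zero ?_ ?_
    · rw [natDegree_le_iff_coeff_eq_zero]
      intro N hN
      rw [fp_coeff, if_neg (by omega)]
    · rw [fp_coeff, if_pos le_rfl]; simpa using hc0
  have h1 : fp n c ∣ ∑ i ∈ Finset.range (m + 1), C (b i * p ^ (m - i)) * X ^ (n * (m - i)) *
      (reflect n r) ^ i := by
    have h3 : fp n c ∣ ∑ i ∈ Finset.range (m + 1), C (b i * p ^ (m - i)) * X ^ (n * (m - i)) *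
      ((X ^ n * g) ^ i - (reflect n r) ^ i) := by
      refine Finset.dvd_sum fun i _ => Dvd.dvd.mul_left ?_ _
      exact (Dvd.intro q (by linear_combination -hq)).trans (sub_dvd_pow_sub_pow _ _ i)
    have h4 := dvd_sub (hdvd.mul_left (X ^ (n * m))) h3
    convert h4 using 1
    rw [Finset.mul_sum, ← Finset.sum_sub_distrib]
    refine Finset.sum_congr rfl fun i hi => ?_
    obtain ⟨j, rfl⟩ := Nat.exists_eq_add_of_le (Nat.lt_succ_iff.mp (Finset.mem_range.mp hi))
    rw [show i + j - i = j by omega]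
    simp only [C_mul, C_pow]
    ring
  set S := ∑ i ∈ Finset.range (m + 1), C (b i * p ^ (m - i)) * X ^ (n * (m - i)) *
      (reflect n r) ^ i with hS
  have hSr : reflect (n * m) S = ∑ i ∈ Finset.range (m + 1),
      C (b i) * C (p : ℤ_[p]) ^ (m - i) * r ^ i := by
    rw [hS, reflect_sum']
    refine Finset.sum_congr rfl fun i hi => ?_
    obtain ⟨j, rfl⟩ := Nat.exists_eq_add_of_le (Nat.lt_succ_iff.mp (Finset.mem_range.mp hi))
    rw [show i + j - i = j by omega, show n * (i + j) = n * j + n * i by ring,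
      reflect_mul _ _ (natDegree_C_mul_X_pow_le _ _), reflect_pow' hrn, reflect_C_mul_X_pow,
      revAt_le le_rfl, reflect_reflect]
    · simp
    · exact (natDegree_pow_le).trans (by rw [mul_comm]; exact Nat.mul_le_mul_right _ hrn)
  have hSd : S.natDegree ≤ n * m := by
    refine natDegree_sum_le_of_forall_le _ _ fun i hi => ?_
    obtain ⟨j, rfl⟩ := Nat.exists_eq_add_of_le (Nat.lt_succ_iff.mp (Finset.mem_range.mp hi))
    rw [show i + j - i = j by omega, show n * (i + j) = n * j + n * i by ring]
    refine natDegree_mul_le_of_le (natDegree_C_mul_X_pow_le _ _) ?_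
    exact (natDegree_pow_le).trans (by rw [mul_comm]; exact Nat.mul_le_mul_right _ hrn)
  rw [← hSr]
  obtain ⟨w, hw⟩ := h1
  by_cases hw0 : w = 0
  · rw [hw, hw0]; simp
  have hf0 : fp n c ≠ 0 := by
    intro h
    have := fp_coeff (n := n) (c := c) n
    rw [h] at this
    simp at this
    exact hc0 this.symm
  rw [hw, natDegree_mul hf0 hw0, hfd] at hSd
  rw [hw, show n * m = n + (n * m - n) by omega, reflect_mul _ _ hfd.le (by omega)]
  exact dvd_mul_right _ _

end alg

section alg
variable {p : ℕ} [Fact p.Prime] {n : ℕ} {c : ℕ → ℤ_[p]}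

theorem isUnit_iff_not_dvd (a : ℤ_[p]) : IsUnit a ↔ ¬ (p : ℤ_[p]) ∣ a := by
  rw [← Ideal.mem_span_singleton, ← PadicInt.maximalIdeal_eq_span_p,
    IsLocalRing.mem_maximalIdeal, mem_nonunits_iff, not_not]

theorem p_smul_inj {x y : KF ℤ_[p] ℚ_[p] n c} (h : (p : ℤ_[p]) • x = (p : ℤ_[p]) • y) : x = y := by
  rw [← algebraMap_smul ℚ_[p] (p : ℤ_[p]) x, ← algebraMap_smul ℚ_[p] (p : ℤ_[p]) y] at h
  have hp : (algebraMap ℤ_[p] ℚ_[p]) (p : ℤ_[p]) ≠ 0 := by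
    simp [(Fact.out : p.Prime).ne_zero]
  exact smul_right_injective _ hp h

theorem first_unit (h : PrimP p n c) :
    ∃ e ≤ n, ¬ (p : ℤ_[p]) ∣ c e ∧ ∀ j < e, (p : ℤ_[p]) ∣ c j := by
  have h' : ∃ i, i ≤ n ∧ ¬ (p : ℤ_[p]) ∣ c i := by
    obtain ⟨i, hi, hu⟩ := h
    exact ⟨i, hi, (isUnit_iff_not_dvd _).mp hu⟩
  refine ⟨Nat.find h', (Nat.find_spec h').1, (Nat.find_spec h').2, fun j hj => ?_⟩
  by_contra hh
  exact Nat.find_min h' hj ⟨hj.le.trans (Nat.find_spec h').1, hh⟩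

theorem red_fp_ne (h : PrimP p n c) : red (fp n c) ≠ 0 := by
  obtain ⟨i, hi, hu⟩ := h
  intro h0
  have := congrArg (fun q => q.coeff (n - i)) h0
  simp only [red, coeff_map, fp_coeff, coeff_zero] at this
  rw [if_pos (by omega), show n - (n - i) = i by omega, toZMod_eq_zero_iff] at this
  exact (isUnit_iff_not_dvd _).mp hu this

theorem isolate {n : ℕ} {a w : ℕ → ℤ_[p]} {i0 : ℕ} (h0 : i0 < n)
    (hs : (p : ℤ_[p]) ∣ ∑ i ∈ Finset.range n, a i * w i)
    (h : ∀ i < n, i ≠ i0 → (p : ℤ_[p]) ∣ a i ∨ (p : ℤ_[p]) ∣ w i)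
    (hw : ¬ (p : ℤ_[p]) ∣ w i0) : (p : ℤ_[p]) ∣ a i0 := by
  rw [← Finset.add_sum_erase _ _ (Finset.mem_range.mpr h0)] at hs
  have h2 : (p : ℤ_[p]) ∣ ∑ i ∈ (Finset.range n).erase i0, a i * w i := by
    refine Finset.dvd_sum fun i hi => ?_
    rw [Finset.mem_erase, Finset.mem_range] at hi
    rcases h i hi.2 hi.1 with h | h
    · exact h.mul_right _
    · exact h.mul_left _
  have h3 := (dvd_add_left h2).mp hs
  exact (PadicInt.prime_p.dvd_or_dvd h3).resolve_right hw

theorem coeff_aux {R : Type*} [CommRing R] (q : R) (A B D : R[X]) :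
    (X ^ 2 * D + C q * X * B + C q ^ 2 * A).coeff 0 = q ^ 2 * A.coeff 0 ∧
    (X ^ 2 * D + C q * X * B + C q ^ 2 * A).coeff 1 = q * B.coeff 0 + q ^ 2 * A.coeff 1 := by
  rw [← C_pow, mul_assoc (C q)]
  constructor
  · simp [-map_pow]
  · simp [-map_pow, coeff_X_pow_mul']

theorem crit_step (hn : 1 ≤ n) (hc0 : c 0 ≠ 0) (hprim : PrimP p n c)
    (hfin : CritFin (fp n c)) (hinf : CritInf c) (y : KF ℤ_[p] ℚ_[p] n c)
    (hy : IsIntegral ℤ_[p] y) (hpy : (p : ℤ_[p]) • y ∈ RFmod ℤ_[p] ℚ_[p] n c) :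
    y ∈ RFmod ℤ_[p] ℚ_[p] n c := by
  have hf := red_fp_ne hprim
  obtain ⟨a, ha⟩ := (mem_RF hn _).mp hpy
  obtain ⟨m, b, hb, hdvd⟩ := integral_step hf y hy _ ha
  have h1 := red_dvd_of_crit hf hfin m b hb hdvd
  have h2 := inf_step hc0 a m b hdvd
  obtain ⟨e, hen, hce, hlt⟩ := first_unit hprim
  have hgc : ∀ t, (∑ i ∈ Finset.range n, C (a i) * Zp c i).coeff t =
      ∑ i ∈ Finset.range n, a i * (Zp c i).coeff t := by
    intro t; simp [finsetSum_coeff]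
  have hrc : ∀ t, (∑ i ∈ Finset.range n, C (a i) * YR n c i).coeff t =
      ∑ i ∈ Finset.range n, a i * (YR n c i).coeff t := by
    intro t; simp [finsetSum_coeff]
  -- finite part
  have hA : e < n → (p : ℤ_[p]) ∣ a 0 ∧ ∀ i, e < i → i < n → (p : ℤ_[p]) ∣ a i := by
    intro he
    have hg0 : red (∑ i ∈ Finset.range n, C (a i) * Zp c i) = 0 := by
      refine eq_zero_of_dvd_of_degree_lt h1 ?_
      have hlow : ((n - e : ℕ) : WithBot ℕ) ≤ (red (fp n c)).degree := by
        refine le_degree_of_ne_zero ?_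
        rw [coeff_map, fp_coeff, if_pos (by omega), show n - (n - e) = e by omega, Ne,
          toZMod_eq_zero_iff]
        exact hce
      refine lt_of_lt_of_le ?_ hlow
      rw [degree_lt_iff_coeff_zero]
      intro t ht
      rw [coeff_map, toZMod_eq_zero_iff, hgc]
      refine Finset.dvd_sum fun i hi => Dvd.dvd.mul_left ?_ _
      rw [Finset.mem_range] at hi
      rw [Zp_coeff]
      split_ifs
      · omega
      · exact dvd_zero _
      · exact hlt _ (by omega)
      · exact dvd_zero _
    have hg1 : ∀ t, (p : ℤ_[p]) ∣ ∑ i ∈ Finset.range n, a i * (Zp c i).coeff t := by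
      intro t
      rw [← hgc, ← toZMod_eq_zero_iff, ← coeff_map]
      exact (congrArg (fun q => q.coeff t) hg0).trans (coeff_zero t)
    refine ⟨isolate hn (hg1 0) ?_ ?_, ?_⟩
    · intro i hi h0
      right
      rw [Zp_coeff, if_neg h0, if_neg (by omega)]
      exact dvd_zero _
    · rw [Zp_coeff, if_pos rfl, if_pos rfl]
      exact PadicInt.prime_p.not_dvd_one
    · have : ∀ k i, e < i → i < n → n - i = k → (p : ℤ_[p]) ∣ a i := by
        intro k
        induction k using Nat.strong_induction_on with
        | _ k ih =>
          intro i hei hin hk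
          refine isolate hin (hg1 (i - e)) ?_ ?_
          · intro j hj hji
            rcases lt_or_gt_of_ne hji with h | h
            · right
              rw [Zp_coeff]
              split_ifs
              · omega
              · exact dvd_zero _
              · exact hlt _ (by omega)
              · exact dvd_zero _
            · left
              exact ih (n - j) (by omega) j (by omega) hj rfl
          · rw [Zp_coeff, if_neg (by omega), if_pos (by omega), show i - (i - e) = e by omega]
            exact hce
      intro i h1 h2
      exact this _ i h1 h2 rfl
  -- infinite part
  have hB : ∀ t < e, (p : ℤ_[p]) ∣ ∑ i ∈ Finset.range n, a i * (YR n c i).coeff t := by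
    have hcoef : ∀ t ≤ n, (reflect n (fp n c)).coeff t = c t := by
      intro t ht
      rw [coeff_reflect, revAt_le ht, fp_coeff, if_pos (by omega), show n - (n - t) = t by omega]
    have hcoef' : ∀ t, n < t → (reflect n (fp n c)).coeff t = 0 := by
      intro t ht
      rw [coeff_reflect, revAt_eq_self_of_lt ht, fp_coeff, if_neg (by omega)]
    have hX : Irreducible (red (X : ℤ_[p][X])) := by
      simpa [red] using (irreducible_X : Irreducible (X : (ZMod p)[X]))
    have hrf : red (reflect n (fp n c)) ≠ 0 := by
      intro h0
      have := congrArg (fun q => q.coeff e) h0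
      simp only [red, coeff_map, coeff_zero] at this
      rw [hcoef e hen, toZMod_eq_zero_iff] at this
      exact hce this
    have hcr : ¬ ∃ A B D, reflect n (fp n c) =
        X ^ 2 * D + C (p : ℤ_[p]) * X * B + C (p : ℤ_[p]) ^ 2 * A := by
      rintro ⟨A, B, D, h⟩
      apply hinf
      have e0 := congrArg (fun q => q.coeff 0) h
      have e1 := congrArg (fun q => q.coeff 1) h
      rw [hcoef 0 (by omega)] at e0
      rw [hcoef 1 hn] at e1
      constructor
      · refine ⟨A.coeff 0, ?_⟩
        rw [e0, (coeff_aux _ _ _ _).1]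
      · refine ⟨B.coeff 0 + p * A.coeff 1, ?_⟩
        rw [e1, (coeff_aux _ _ _ _).2]
        ring
    have hdv : red (X : ℤ_[p][X]) ^ e ∣ red (reflect n (fp n c)) := by
      rw [red, map_X, X_pow_dvd_iff]
      intro d hd
      rw [coeff_map, hcoef d (by omega), toZMod_eq_zero_iff]
      exact hlt d hd
    have := local_crit hrf hX hcr m b hb h2 e hdv
    rw [red, map_X, X_pow_dvd_iff] at this
    intro t ht
    have h := this t ht
    rwa [coeff_map, toZMod_eq_zero_iff, hrc] at h
  have h0 : (p : ℤ_[p]) ∣ a 0 := by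
    by_cases he : e < n
    · exact (hA he).1
    · refine isolate hn (hB 0 (by omega)) ?_ ?_
      · intro i hi hi0
        right
        rw [YR_coeff, if_neg hi0, if_pos (by omega)]
        exact (hlt _ (by omega)).neg_right
      · rw [YR_coeff, if_pos rfl, if_pos rfl]
        exact PadicInt.prime_p.not_dvd_one
  have hall : ∀ k i, 0 < i → i < n → n - i = k → (p : ℤ_[p]) ∣ a i := by
    intro k
    induction k using Nat.strong_induction_on with
    | _ k ih =>
      intro i hi0 hin hk
      by_cases hie : e < i
      · exact (hA (by omega)).2 i hie hin
      · refine isolate hin (hB (e - i) (by omega)) ?_ ?_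
        · intro j hj hji
          by_cases hj0 : j = 0
          · left; rw [hj0]; exact h0
          rcases lt_or_gt_of_ne hji with h | h
          · right
            rw [YR_coeff, if_neg hj0, if_pos (by omega)]
            exact (hlt _ (by omega)).neg_right
          · left
            exact ih (n - j) (by omega) j (by omega) hj rfl
        · rw [YR_coeff, if_neg (by omega), if_pos (by omega), show i + (e - i) = e by omega,
            dvd_neg]
          exact hce
  have hfinal : ∀ i, ∃ b, i < n → a i = p * b := by
    intro i
    by_cases hi : i < n
    · rcases Nat.eq_zero_or_pos i with rfl | h
      · obtain ⟨b, hb⟩ := h0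
        exact ⟨b, fun _ => hb⟩
      · obtain ⟨b, hb⟩ := hall _ i h hi rfl
        exact ⟨b, fun _ => hb⟩
    · exact ⟨0, fun h => absurd h hi⟩
  choose a' ha' using hfinal
  rw [mem_RF hn]
  refine ⟨a', p_smul_inj ?_⟩
  rw [ha, ← map_smul]
  congr 1
  rw [Finset.smul_sum]
  refine Finset.sum_congr rfl fun i hi => ?_
  rw [ha' i (Finset.mem_range.mp hi), smul_eq_C_mul, C_mul]
  ring

end alg

section alg
variable {p : ℕ} [Fact p.Prime] {n : ℕ} {c : ℕ → ℤ_[p]}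

local notation "θ" => θF ℤ_[p] ℚ_[p] n c

theorem one_mem_RF : (1 : KF ℤ_[p] ℚ_[p] n c) ∈ RFmod ℤ_[p] ℚ_[p] n c :=
  Submodule.subset_span (Or.inl rfl)

theorem zeta_mem_RF {i : ℕ} (h1 : 1 ≤ i) (h2 : i < n) :
    ζF ℤ_[p] ℚ_[p] n c i ∈ RFmod ℤ_[p] ℚ_[p] n c :=
  Submodule.subset_span (Or.inr ⟨i, h1, by omega, rfl⟩)

theorem pow_mem_RF (i : ℕ) (hi : i < n) :
    c 0 ^ i • θ ^ i ∈ RFmod ℤ_[p] ℚ_[p] n c := by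
  induction i using Nat.strong_induction_on with
  | _ i ih =>
    rcases Nat.eq_zero_or_pos i with rfl | h
    · simpa using one_mem_RF
    obtain ⟨k, rfl⟩ : ∃ k, i = k + 1 := ⟨i - 1, by omega⟩
    have hz : ζF ℤ_[p] ℚ_[p] n c (k + 1) = c 0 • θ ^ (k + 1) +
        ∑ j ∈ Finset.range k, c (j + 1) • θ ^ (k - j) := by
      rw [ζF, Finset.sum_range_succ', add_comm, Algebra.smul_def]
      congr 1
      refine Finset.sum_congr rfl fun j hj => ?_
      rw [Algebra.smul_def, Nat.add_sub_add_right]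
    have : c 0 ^ (k + 1) • θ ^ (k + 1) = c 0 ^ k • ζF ℤ_[p] ℚ_[p] n c (k + 1) -
        ∑ j ∈ Finset.range k, (c (j + 1) * c 0 ^ j) • (c 0 ^ (k - j) • θ ^ (k - j)) := by
      rw [hz, smul_add, smul_smul, ← pow_succ, Finset.smul_sum]
      rw [eq_sub_iff_add_eq]
      congr 1
      refine Finset.sum_congr rfl fun j hj => ?_
      rw [Finset.mem_range] at hj
      rw [smul_smul, smul_smul]
      congr 1
      conv_rhs => rw [← Nat.sub_add_cancel hj.le, pow_add]
      ring
    rw [this]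
    refine Submodule.sub_mem _ (Submodule.smul_mem _ _ (zeta_mem_RF (by omega) hi)) ?_
    refine Submodule.sum_mem _ fun j hj => Submodule.smul_mem _ _ (ih _ ?_ ?_) <;> omega

theorem binPoly_natDegree (hc0 : c 0 ≠ 0) : (binPoly ℤ_[p] ℚ_[p] n c).natDegree = n := by
  rw [← fp_map, natDegree_map_eq_of_injective (IsFractionRing.injective _ _)]
  refine natDegree_eq_of_le_of_coeff_ne_zero ?_ ?_
  · rw [natDegree_le_iff_coeff_eq_zero]
    intro N hN
    rw [fp_coeff, if_neg (by omega)]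
  · rw [fp_coeff, if_pos le_rfl]; simpa using hc0

theorem binPoly_ne_zero (hc0 : c 0 ≠ 0) : binPoly ℤ_[p] ℚ_[p] n c ≠ 0 := by
  rw [← fp_map, Ne, Polynomial.map_eq_zero_iff (IsFractionRing.injective _ _)]
  intro h
  have := fp_coeff (n := n) (c := c) n
  rw [h] at this
  simp at this
  exact hc0 this.symm

theorem exists_smul_mem (hn : 1 ≤ n) (hc0 : c 0 ≠ 0) (x : KF ℤ_[p] ℚ_[p] n c) :
    ∃ d : ℤ_[p], d ≠ 0 ∧ d • x ∈ RFmod ℤ_[p] ℚ_[p] n c := by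
  obtain ⟨g, rfl⟩ := AdjoinRoot.mk_surjective x
  have h1 : AdjoinRoot.mk (binPoly ℤ_[p] ℚ_[p] n c) g =
      AdjoinRoot.mk (binPoly ℤ_[p] ℚ_[p] n c) (g % binPoly ℤ_[p] ℚ_[p] n c) := by
    rw [AdjoinRoot.mk_eq_mk]
    exact ⟨g / binPoly ℤ_[p] ℚ_[p] n c, by
      linear_combination -EuclideanDomain.div_add_mod g (binPoly ℤ_[p] ℚ_[p] n c)⟩
  rw [h1]
  have hdeg : (g % binPoly ℤ_[p] ℚ_[p] n c).natDegree < n := by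
    have := natDegree_mod_lt g (q := binPoly ℤ_[p] ℚ_[p] n c)
      (by rw [binPoly_natDegree hc0]; omega)
    rwa [binPoly_natDegree hc0] at this
  rw [as_sum_range_C_mul_X_pow' (g % binPoly ℤ_[p] ℚ_[p] n c) hdeg, map_sum]
  have hs : ∀ s : Finset ℕ, (∀ i ∈ s, i < n) → ∃ d : ℤ_[p], d ≠ 0 ∧
      d • ∑ i ∈ s, AdjoinRoot.mk (binPoly ℤ_[p] ℚ_[p] n c)
        (C ((g % binPoly ℤ_[p] ℚ_[p] n c).coeff i) * X ^ i) ∈ RFmod ℤ_[p] ℚ_[p] n c := by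
    intro s
    induction s using Finset.induction_on with
    | empty => intro _; exact ⟨1, one_ne_zero, by simp⟩
    | insert i s his ih =>
      intro hs
      obtain ⟨d, hd, hd'⟩ := ih fun j hj => hs j (Finset.mem_insert_of_mem hj)
      have hi := hs i (Finset.mem_insert_self _ _)
      obtain ⟨a, b, hb, hab⟩ := IsFractionRing.div_surjective (A := ℤ_[p])
        ((g % binPoly ℤ_[p] ℚ_[p] n c).coeff i)
      have hb0 : b ≠ 0 := nonZeroDivisors.ne_zero hb
      refine ⟨d * (b * c 0 ^ i), mul_ne_zero hd (mul_ne_zero hb0 (pow_ne_zero _ hc0)), ?_⟩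
      rw [Finset.sum_insert his, smul_add]
      refine Submodule.add_mem _ ?_ ?_
      · have : (d * (b * c 0 ^ i)) • AdjoinRoot.mk (binPoly ℤ_[p] ℚ_[p] n c)
            (C ((g % binPoly ℤ_[p] ℚ_[p] n c).coeff i) * X ^ i) =
            (d * a) • (c 0 ^ i • θ ^ i) := by
          rw [← hab, map_mul, map_pow, AdjoinRoot.mk_X, AdjoinRoot.mk_C]
          change _ = (d * a) • (c 0 ^ i • (AdjoinRoot.root _) ^ i)
          simp only [Algebra.smul_def, map_mul, map_pow]
          simp only [IsScalarTower.algebraMap_apply ℤ_[p] ℚ_[p]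
            (AdjoinRoot (binPoly ℤ_[p] ℚ_[p] n c)), AdjoinRoot.algebraMap_eq]
          have : (algebraMap ℤ_[p] ℚ_[p] a) = algebraMap ℤ_[p] ℚ_[p] b *
              (algebraMap ℤ_[p] ℚ_[p] a / algebraMap ℤ_[p] ℚ_[p] b) := by
            rw [mul_div_cancel₀]
            simpa using hb0
          conv_rhs => rw [this, map_mul]
          ring
        rw [this]
        exact Submodule.smul_mem _ _ (pow_mem_RF i hi)
      · rw [mul_comm, mul_smul]
        exact Submodule.smul_mem _ _ hd'
  exact hs _ fun i hi => Finset.mem_range.mp hi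

theorem exists_pow_smul_mem (hn : 1 ≤ n) (hc0 : c 0 ≠ 0) (x : KF ℤ_[p] ℚ_[p] n c) :
    ∃ k : ℕ, (p : ℤ_[p]) ^ k • x ∈ RFmod ℤ_[p] ℚ_[p] n c := by
  obtain ⟨d, hd, h⟩ := exists_smul_mem hn hc0 x
  refine ⟨d.valuation, ?_⟩
  rw [PadicInt.unitCoeff_spec hd, mul_smul] at h
  have := Submodule.smul_mem _ ((PadicInt.unitCoeff hd)⁻¹ : ℤ_[p]ˣ).val h
  rwa [smul_smul, Units.inv_mul, one_smul] at this

theorem crit_le (hn : 1 ≤ n) (hc0 : c 0 ≠ 0) (hprim : PrimP p n c)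
    (hfin : CritFin (fp n c)) (hinf : CritInf c) (y : KF ℤ_[p] ℚ_[p] n c)
    (hy : IsIntegral ℤ_[p] y) : y ∈ RFmod ℤ_[p] ℚ_[p] n c := by
  obtain ⟨k, hk⟩ := exists_pow_smul_mem hn hc0 y
  induction k with
  | zero => simpa using hk
  | succ k ih =>
    apply ih
    refine crit_step hn hc0 hprim hfin hinf _ (hy.smul _) ?_
    rwa [smul_smul, ← pow_succ']

theorem zeta_integral {i : ℕ} (hi : i < n) : IsIntegral ℤ_[p] (ζF ℤ_[p] ℚ_[p] n c i) := by
  set I : Submodule ℤ_[p] (KF ℤ_[p] ℚ_[p] n c) :=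
    Submodule.span ℤ_[p] (Set.range fun j : Fin n => θ ^ (j : ℕ)) with hI
  have hmem : ∀ j, j < n → θ ^ j ∈ I := fun j hj => Submodule.subset_span ⟨⟨j, hj⟩, rfl⟩
  have hrel : ∑ k ∈ Finset.range (n + 1), c k • θ ^ (n - k) = 0 := by
    have := ev_fp (n := n) (c := c)
    rw [ev, fp, map_sum] at this
    rw [← this]
    refine Finset.sum_congr rfl fun k _ => ?_
    rw [map_mul, map_pow, aeval_C, aeval_X, Algebra.smul_def]
  have hgen : ∀ j, j < n → ζF ℤ_[p] ℚ_[p] n c i * θ ^ j ∈ I := by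
    intro j hj
    have hz : ζF ℤ_[p] ℚ_[p] n c i * θ ^ j = ∑ k ∈ Finset.range i, c k • θ ^ (i - k + j) := by
      rw [ζF, Finset.sum_mul]
      refine Finset.sum_congr rfl fun k _ => ?_
      rw [Algebra.smul_def, pow_add, mul_assoc]
    rw [hz]
    by_cases hij : i + j < n
    · refine Submodule.sum_mem _ fun k _ => Submodule.smul_mem _ _ (hmem _ (by omega))
    · have h2 : ∑ k ∈ Finset.range i, c k • θ ^ (i - k + j) +
        ∑ k ∈ Finset.range (n + 1 - i), c (i + k) • θ ^ (j - k) = 0 := by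
        have h3 : ∑ k ∈ Finset.range (n + 1), (c k • θ ^ (n - k)) * θ ^ (j - (n - i)) = 0 := by
          rw [← Finset.sum_mul, hrel, zero_mul]
        rw [show n + 1 = i + (n + 1 - i) by omega, Finset.sum_range_add] at h3
        rw [← h3]
        congr 1
        · refine Finset.sum_congr rfl fun k hk => ?_
          rw [Finset.mem_range] at hk
          rw [smul_mul_assoc, ← pow_add]
          congr 2; omega
        · refine Finset.sum_congr rfl fun k hk => ?_
          rw [Finset.mem_range] at hk
          rw [smul_mul_assoc, ← pow_add]
          congr 2; omega
      rw [eq_neg_of_add_eq_zero_left h2]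
      refine Submodule.neg_mem _ (Submodule.sum_mem _ fun k _ => Submodule.smul_mem _ _
        (hmem _ (by omega)))
  have hgen' : ∀ x ∈ I, ζF ℤ_[p] ℚ_[p] n c i * x ∈ I := by
    intro x hx
    induction hx using Submodule.span_induction with
    | mem x hx => obtain ⟨j, rfl⟩ := hx; exact hgen _ j.2
    | zero => simp
    | add x y _ _ hx hy => rw [mul_add]; exact I.add_mem hx hy
    | smul a x _ hx => rw [mul_smul_comm]; exact I.smul_mem _ hx
  have hadj : ∀ s ∈ Algebra.adjoin ℤ_[p] {ζF ℤ_[p] ℚ_[p] n c i}, ∀ x ∈ I, s * x ∈ I := by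
    intro s hs
    induction hs using Algebra.adjoin_induction with
    | mem s hs => rw [Set.mem_singleton_iff] at hs; rw [hs]; exact hgen'
    | algebraMap r => intro x hx; rw [← Algebra.smul_def]; exact I.smul_mem _ hx
    | add s t _ _ hs ht => intro x hx; rw [add_mul]; exact I.add_mem (hs x hx) (ht x hx)
    | mul s t _ _ hs ht => intro x hx; rw [mul_assoc]; exact hs _ (ht x hx)
  have h1 : (1 : KF ℤ_[p] ℚ_[p] n c) ∈ I := by simpa using hmem 0 (by omega)
  have hle : Subalgebra.toSubmodule (Algebra.adjoin ℤ_[p] {ζF ℤ_[p] ℚ_[p] n c i}) ≤ I := by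
    intro s hs
    simpa using hadj s hs 1 h1
  have hfg : I.FG := Submodule.fg_span (Set.finite_range _)
  have hnoe : IsNoetherian ℤ_[p] I := isNoetherian_of_fg_of_noetherian I hfg
  exact IsIntegral.of_mem_of_fg _ (isNoetherian_submodule.mp hnoe _ hle) _
    (Algebra.subset_adjoin rfl)

theorem RF_integral (hn : 1 ≤ n) (y : KF ℤ_[p] ℚ_[p] n c) (hy : y ∈ RFmod ℤ_[p] ℚ_[p] n c) :
    IsIntegral ℤ_[p] y := by
  have : RFmod ℤ_[p] ℚ_[p] n c ≤
      Subalgebra.toSubmodule (integralClosure ℤ_[p] (KF ℤ_[p] ℚ_[p] n c)) := by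
    refine Submodule.span_le.mpr ?_
    rintro x (rfl | ⟨i, h1, h2, rfl⟩)
    · exact isIntegral_one
    · exact zeta_integral (by omega)
  exact this hy

theorem crit_max (hn : 1 ≤ n) (hc0 : c 0 ≠ 0) (hprim : PrimP p n c)
    (hfin : CritFin (fp n c)) (hinf : CritInf c) : IsMaxOrder ℤ_[p] ℚ_[p] n c := by
  ext y
  exact ⟨fun h => RF_integral hn y h, fun h => crit_le hn hc0 hprim hfin hinf y h⟩

end alg

theorem quad_integral {R A : Type*} [CommRing R] [CommRing A] [Algebra R A] {x b d : A}
    (hb : IsIntegral R b) (hd : IsIntegral R d) (h : x ^ 2 + b * x + d = 0) : IsIntegral R x := by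
  have h1 : IsIntegral (integralClosure R A) x := by
    refine ⟨X ^ 2 + (C (⟨b, hb⟩ : integralClosure R A) * X + C ⟨d, hd⟩), ?_, ?_⟩
    · refine monic_X_pow_add ?_
      refine lt_of_le_of_lt degree_linear_le ?_
      norm_num
    · simp only [eval₂_add, eval₂_mul, eval₂_pow, eval₂_X, eval₂_C]
      rw [← add_assoc]; exact h
  exact isIntegral_trans (R := R) (A := integralClosure R A) x h1

section alg
variable {p : ℕ} [Fact p.Prime] {n : ℕ} {c : ℕ → ℤ_[p]}

local notation "θ" => θF ℤ_[p] ℚ_[p] n c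

theorem crit_sep (hn : 1 ≤ n) (hc0 : c 0 ≠ 0) (hmax : IsMaxOrder ℤ_[p] ℚ_[p] n c) :
    SepDegP p n c := by
  refine ⟨?_, binPoly_natDegree hc0⟩
  rw [PerfectField.separable_iff_squarefree]
  rintro h ⟨k, hk⟩
  by_contra hu
  set f := binPoly ℤ_[p] ℚ_[p] n c with hf
  have hf0 : f ≠ 0 := binPoly_ne_zero hc0
  set N : KF ℤ_[p] ℚ_[p] n c := AdjoinRoot.mk f (h * k) with hN
  have hN0 : N ≠ 0 := by
    rw [hN, Ne, AdjoinRoot.mk_eq_zero]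
    rintro ⟨q, hq⟩
    have hhk : h * k ≠ 0 := by
      intro h0
      rw [mul_assoc, h0, mul_zero] at hk
      exact hf0 hk
    apply hu
    refine IsUnit.of_mul_eq_one q ?_
    apply mul_left_cancel₀ hhk
    rw [mul_one]
    conv_rhs => rw [hq, hk]
    ring
  have hN2 : N ^ 2 = 0 := by
    rw [hN, ← map_pow, AdjoinRoot.mk_eq_zero, hk]
    exact ⟨k, by ring⟩
  have hmem : ∀ q : ℚ_[p], q • N ∈ RFmod ℤ_[p] ℚ_[p] n c := by
    intro q
    rw [hmax]
    change IsIntegral _ _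
    refine ⟨X ^ 2, monic_X_pow 2, ?_⟩
    rw [eval₂_pow, eval₂_X, _root_.smul_pow, hN2, smul_zero]
  have hfin : Module.Finite ℤ_[p] (RFmod ℤ_[p] ℚ_[p] n c) := by
    refine Module.Finite.iff_fg.mpr ?_
    refine Submodule.fg_span ?_
    refine Set.Finite.union (Set.finite_singleton _) ?_
    refine Set.Finite.subset ((Set.finite_Icc 1 (n - 1)).image (ζF ℤ_[p] ℚ_[p] n c)) ?_
    rintro x ⟨i, h1, h2, rfl⟩
    exact ⟨i, ⟨h1, h2⟩, rfl⟩
  have hkr := Ideal.iInf_pow_smul_eq_bot_of_isLocalRing (M := RFmod ℤ_[p] ℚ_[p] n c)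
    (IsLocalRing.maximalIdeal ℤ_[p]) Ideal.IsPrime.ne_top'
  have : (⟨N, by simpa using hmem 1⟩ : RFmod ℤ_[p] ℚ_[p] n c) ∈
      (⨅ i : ℕ, IsLocalRing.maximalIdeal ℤ_[p] ^ i • ⊤ :
        Submodule ℤ_[p] (RFmod ℤ_[p] ℚ_[p] n c)) := by
    rw [Submodule.mem_iInf]
    intro i
    have hp : (p : ℚ_[p]) ≠ 0 := by simp [(Fact.out : p.Prime).ne_zero]
    have e : (⟨N, by simpa using hmem 1⟩ : RFmod ℤ_[p] ℚ_[p] n c) =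
        ((p : ℤ_[p]) ^ i) • ⟨((p : ℚ_[p]) ^ i)⁻¹ • N, hmem _⟩ := by
      ext
      simp only [SetLike.mk_smul_mk]
      rw [← algebraMap_smul ℚ_[p], smul_smul, map_pow]
      simp [hp]
    rw [e]
    refine Submodule.smul_mem_smul (Ideal.pow_mem_pow ?_ i) Submodule.mem_top
    rw [PadicInt.maximalIdeal_eq_span_p]
    exact Ideal.mem_span_singleton_self _
  rw [hkr, Submodule.mem_bot] at this
  exact hN0 (congrArg Subtype.val this)

theorem max_inf (hn : 3 ≤ n) (hc0 : c 0 ≠ 0) (hprim : PrimP p n c)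
    (hmax : IsMaxOrder ℤ_[p] ℚ_[p] n c) : CritInf c := by
  rintro ⟨⟨u, hu⟩, ⟨w, hw⟩⟩
  have hInteg : IsIntegral ℤ_[p] ((p * u : ℤ_[p]) • θ) := by
    refine quad_integral (b := algebraMap _ _ w)
      (d := algebraMap _ _ (-u) * ζF ℤ_[p] ℚ_[p] n c 2) isIntegral_algebraMap
      (isIntegral_algebraMap.mul (zeta_integral (by omega))) ?_
    have : ζF ℤ_[p] ℚ_[p] n c 2 = algebraMap _ _ ((p : ℤ_[p]) ^ 2 * u) * θ ^ 2 +
      algebraMap _ _ (p * w) * θ := by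
      rw [ζF, Finset.sum_range_succ, Finset.sum_range_one, hu, hw]; simp
    rw [this]
    simp only [Algebra.smul_def, map_mul, map_neg, map_pow]
    ring
  have hm : (p * u : ℤ_[p]) • θ ∈ RFmod ℤ_[p] ℚ_[p] n c := by
    rw [hmax]; exact hInteg
  obtain ⟨a, ha⟩ := (mem_RF (by omega) _).mp hm
  have hg : C (p * u) * X = ∑ i ∈ Finset.range n, C (a i) * Zp c i := by
    rw [← sub_eq_zero]
    have h0 : fp n c ∣ C (p * u) * X - ∑ i ∈ Finset.range n, C (a i) * Zp c i := by
      rw [← ev_eq_zero_iff (red_fp_ne hprim), ev, map_sub, ← ev, ← ev, ← ha]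
      rw [ev, map_mul, aeval_C, aeval_X, Algebra.smul_def, sub_self]
    refine eq_zero_of_dvd_of_degree_lt h0 ?_
    have hlow : (n : WithBot ℕ) ≤ (fp n c).degree := by
      refine le_degree_of_ne_zero ?_
      rw [fp_coeff, if_pos le_rfl]; simpa using hc0
    refine lt_of_lt_of_le ?_ hlow
    rw [degree_lt_iff_coeff_zero]
    intro t ht
    rw [coeff_sub, coeff_C_mul, coeff_X, if_neg (by omega), mul_zero, zero_sub, neg_eq_zero,
      finsetSum_coeff]
    refine Finset.sum_eq_zero fun i hi => ?_
    rw [Finset.mem_range] at hi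
    rw [coeff_C_mul, Zp_coeff]
    split_ifs <;> first | omega | simp
  have hcf : ∀ t, (C (p * u) * X : ℤ_[p][X]).coeff t =
      ∑ i ∈ Finset.range n, a i * (Zp c i).coeff t := by
    intro t; rw [hg, finsetSum_coeff]; simp only [coeff_C_mul]
  have hiso : ∀ i0, 1 ≤ i0 → i0 < n → (∀ i, i0 < i → i < n → a i = 0) →
      ∑ i ∈ Finset.range n, a i * (Zp c i).coeff i0 = a i0 * c 0 := by
    intro i0 h1 h2 h3
    rw [Finset.sum_eq_single i0]
    · rw [Zp_coeff, if_neg (by omega), if_pos (by omega), Nat.sub_self]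
    · intro i hi hne
      rw [Finset.mem_range] at hi
      rcases lt_or_gt_of_ne hne with h | h
      · rw [Zp_coeff]
        split_ifs <;> first | omega | simp
      · rw [h3 i h hi, zero_mul]
    · intro h; exact absurd (Finset.mem_range.mpr h2) h
  have hz : ∀ k i, 2 ≤ i → i < n → n - i = k → a i = 0 := by
    intro k
    induction k using Nat.strong_induction_on with
    | _ k ih =>
      intro i h1 h2 h3
      have h4 := hcf i
      rw [hiso i (by omega) h2 fun j hj hjn => ih (n - j) (by omega) j (by omega) hjn rfl,
        coeff_C_mul, coeff_X, if_neg (by omega), mul_zero] at h4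
      exact (mul_eq_zero.mp h4.symm).resolve_right hc0
  have h5 := hcf 1
  rw [hiso 1 le_rfl (by omega) fun j hj hjn => hz _ j hj hjn rfl, coeff_C_mul, coeff_X, if_pos rfl,
    mul_one, hu] at h5
  have hpu : (p * u : ℤ_[p]) ≠ 0 := by
    intro h; apply hc0; rw [hu, pow_two, mul_assoc, h, mul_zero]
  have : (p : ℤ_[p]) * a 1 = 1 := by
    apply mul_left_cancel₀ hpu
    linear_combination -h5
  exact PadicInt.prime_p.not_isUnit (IsUnit.of_mul_eq_one _ this)

theorem max_fin (hn : 1 ≤ n) (hprim : PrimP p n c)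
    (hmax : IsMaxOrder ℤ_[p] ℚ_[p] n c) : CritFin (fp n c) := by
  rintro P hP ⟨A, B, D, hf⟩
  have hfr := red_fp_ne hprim
  have hredf : red (fp n c) = red P ^ 2 * red D := by
    rw [hf]; simp [red]
  have hD0 : red D ≠ 0 := by
    intro h; rw [h, mul_zero] at hredf; exact hfr hredf
  obtain ⟨e, hen, hce, hlt⟩ := first_unit hprim
  have hce' : PadicInt.toZMod (c e) ≠ 0 := by rwa [Ne, toZMod_eq_zero_iff]
  rcases hen.lt_or_eq with he | rfl
  swap
  · have : red (fp e c) = C (PadicInt.toZMod (c e)) := by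
      ext t
      rw [coeff_map, fp_coeff, coeff_C]
      split_ifs with h1 h2 h2
      · rw [h2, Nat.sub_zero]
      · rw [toZMod_eq_zero_iff]; exact hlt _ (by omega)
      · omega
      · simp
    have hu : IsUnit (red P ^ 2 * red D) := by
      rw [← hredf, this]; exact isUnit_C.mpr hce'.isUnit
    exact hP.not_isUnit ((isUnit_pow_iff two_ne_zero).mp (isUnit_of_mul_isUnit_left hu))
  set rp : ℤ_[p][X] := ∑ j ∈ Finset.range (e + 1), C (c j) * X ^ (e - j) with hrp
  have hredr : red rp = C (PadicInt.toZMod (c e)) := by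
    rw [hrp, red, Polynomial.map_sum, Finset.sum_range_succ, Finset.sum_eq_zero]
    · simp
    · intro j hj
      rw [Polynomial.map_mul, map_C, (toZMod_eq_zero_iff _).mpr (hlt j (Finset.mem_range.mp hj))]
      simp
  have hρ : IsIntegral ℤ_[p] (ev n c rp) := by
    have : ev n c rp = ζF ℤ_[p] ℚ_[p] n c e + algebraMap _ _ (c e) := by
      rw [ev, hrp, map_sum, Finset.sum_range_succ, ζF]
      simp
    rw [this]
    exact (zeta_integral he).add isIntegral_algebraMap
  have hρθ : IsIntegral ℤ_[p] (θ * ev n c rp) := by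
    have h1 : θ * ev n c rp = ζF ℤ_[p] ℚ_[p] n c (e + 1) := by
      rw [ev, hrp, map_sum, ζF, Finset.mul_sum]
      refine Finset.sum_congr rfl fun j hj => ?_
      rw [Finset.mem_range] at hj
      rw [map_mul, aeval_C, map_pow, aeval_X, show e + 1 - j = (e - j) + 1 by omega, pow_succ]
      ring
    rw [h1]
    rcases (show e + 1 ≤ n from he).lt_or_eq with h | h
    · exact zeta_integral h
    · have h2 : ζF ℤ_[p] ℚ_[p] n c (e + 1) + algebraMap _ _ (c (e + 1)) = 0 := by
        have := ev_fp (n := n) (c := c)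
        rw [ev, fp, map_sum, ← h, Finset.sum_range_succ] at this
        rw [h] at this ⊢
        rw [ζF]
        simpa using this
      rw [eq_neg_of_add_eq_zero_left h2]
      exact isIntegral_algebraMap.neg
  have hInteg : ∀ (N : ℕ) (g : ℤ_[p][X]), g.natDegree ≤ N →
      IsIntegral ℤ_[p] (ev n c rp ^ N * ev n c g) := by
    intro N g hg
    have h1 : ev n c g = ∑ k ∈ Finset.range (N + 1), algebraMap _ _ (g.coeff k) * θ ^ k := by
      conv_lhs => rw [as_sum_range_C_mul_X_pow' g (Nat.lt_succ_of_le hg), ev, map_sum]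
      simp
    rw [h1, Finset.mul_sum]
    refine IsIntegral.sum _ fun k hk => ?_
    rw [Finset.mem_range] at hk
    have : ev n c rp ^ N * (algebraMap _ _ (g.coeff k) * θ ^ k) =
        algebraMap _ _ (g.coeff k) * (ev n c rp ^ (N - k) * (θ * ev n c rp) ^ k) := by
      conv_lhs => rw [show N = N - k + k by omega, pow_add]
      rw [mul_pow]; ring
    rw [this]
    exact isIntegral_algebraMap.mul ((hρ.pow _).mul (hρθ.pow _))
  set N := max B.natDegree (A * D).natDegree with hN
  have hp : (p : ℚ_[p]) ≠ 0 := by simp [(Fact.out : p.Prime).ne_zero]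
  set γ : KF ℤ_[p] ℚ_[p] n c := (p : ℚ_[p])⁻¹ • ev n c (rp ^ N * P * D) with hγ
  have hpγ : (p : ℤ_[p]) • γ = ev n c (rp ^ N * P * D) := by
    rw [hγ, ← algebraMap_smul ℚ_[p], smul_smul]
    simp [hp]
  have hγi : IsIntegral ℤ_[p] γ := by
    refine quad_integral (hInteg N B (le_max_left _ _))
      ((hρ.pow N).mul (hInteg N (A * D) (le_max_right _ _))) ?_
    apply p_smul_inj
    apply p_smul_inj
    have h0 := ev_fp (n := n) (c := c)
    have h1 : (p : ℤ_[p]) • (p : ℤ_[p]) • (γ ^ 2 + ev n c rp ^ N * ev n c B * γ +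
        ev n c rp ^ N * (ev n c rp ^ N * ev n c (A * D))) =
        ((p : ℤ_[p]) • γ) ^ 2 + algebraMap _ _ (p : ℤ_[p]) * ev n c rp ^ N * ev n c B *
        ((p : ℤ_[p]) • γ) + algebraMap _ _ (p : ℤ_[p]) ^ 2 *
        (ev n c rp ^ N * (ev n c rp ^ N * ev n c (A * D))) := by
      simp only [Algebra.smul_def]; ring
    rw [h1, hpγ, smul_zero, smul_zero]
    have h2 : ev n c (rp ^ N * rp ^ N * D * fp n c) = 0 := by
      rw [ev, map_mul, ← ev, ← ev, h0, mul_zero]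
    rw [← h2, hf]
    simp only [ev, map_mul, map_add, map_pow, aeval_C]
    ring
  have hγm : γ ∈ RFmod ℤ_[p] ℚ_[p] n c := by rw [hmax]; exact hγi
  obtain ⟨a, ha⟩ := (mem_RF hn _).mp hγm
  set g := ∑ i ∈ Finset.range n, C (a i) * Zp c i with hg
  have hdvd : fp n c ∣ rp ^ N * P * D - C (p : ℤ_[p]) * g := by
    rw [← ev_eq_zero_iff hfr, ev, map_sub, ← ev, ← hpγ, ha, map_mul, aeval_C, Algebra.smul_def,
      sub_self]
  have h3 : red (fp n c) ∣ red (rp ^ N * P * D - C (p : ℤ_[p]) * g) :=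
    _root_.map_dvd (Polynomial.mapRingHom (PadicInt.toZMod (p := p))) hdvd
  have h4 : red (rp ^ N * P * D - C (p : ℤ_[p]) * g) =
      (red P * red D) * C (PadicInt.toZMod (c e)) ^ N := by
    rw [← hredr]; simp [red]; ring
  rw [h4, hredf, show red P ^ 2 * red D = (red P * red D) * red P by ring] at h3
  have h5 := (mul_dvd_mul_iff_left (mul_ne_zero hP.ne_zero hD0)).mp h3
  exact hP.not_isUnit (isUnit_of_dvd_unit h5 ((isUnit_C.mpr hce'.isUnit).pow N))

theorem max_iff (hn : 3 ≤ n) (hc0 : c 0 ≠ 0) :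
    (SepDegP p n c ∧ PrimP p n c ∧ IsMaxOrder ℤ_[p] ℚ_[p] n c) ↔
      (PrimP p n c ∧ CritFin (fp n c) ∧ CritInf c) := by
  constructor
  · rintro ⟨_, h2, h3⟩
    exact ⟨h2, max_fin (by omega) h2 h3, max_inf hn hc0 h2 h3⟩
  · rintro ⟨h1, h2, h3⟩
    have := crit_max (by omega) hc0 h1 h2 h3
    exact ⟨crit_sep (by omega) hc0 this, h1, this⟩

end alg

theorem sq_mul_sqfree {k : Type*} [Field k] (H : k[X]) (hH : H ≠ 0) :
    ∃ h s : k[X], H = h ^ 2 * s ∧ Squarefree s := by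
  induction hd : H.natDegree using Nat.strong_induction_on generalizing H with
  | _ d ih =>
    by_cases hs : Squarefree H
    · exact ⟨1, H, by simp, hs⟩
    · rw [Squarefree] at hs
      push Not at hs
      obtain ⟨x, ⟨t, ht⟩, hx⟩ := hs
      have hx0 : x ≠ 0 := by rintro rfl; apply hH; rw [ht]; simp
      have ht0 : t ≠ 0 := by rintro rfl; apply hH; rw [ht]; simp
      have hxd : 0 < x.natDegree := natDegree_pos_iff_degree_pos.mpr (degree_pos_of_ne_zero_of_nonunit hx0 hx)
      have : t.natDegree < d := by
        rw [← hd, ht, natDegree_mul (mul_ne_zero hx0 hx0) ht0, natDegree_mul hx0 hx0]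
        omega
      obtain ⟨h, s, hhs, hs⟩ := ih _ this t ht0 rfl
      exact ⟨x * h, s, by rw [ht, hhs]; ring, hs⟩

theorem dvd_of_sq_dvd {k : Type*} [Field k] {P h s : k[X]} (hP : Irreducible P)
    (hs : Squarefree s) (hd : P ^ 2 ∣ h ^ 2 * s) : P ∣ h := by
  by_contra hn
  have hco : IsCoprime P h := (hP.coprime_iff_not_dvd).mpr hn
  have h1 : P ^ 2 ∣ s := (hco.pow (m := 2) (n := 2)).dvd_of_dvd_mul_left hd
  rw [pow_two] at h1
  exact hP.not_isUnit (hs P h1)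

section
variable {p : ℕ} [Fact p.Prime]

theorem lift_deg (H : (ZMod p)[X]) : ∃ L : ℤ_[p][X], red L = H ∧ L.degree = H.degree := by
  have : H ∈ lifts (PadicInt.toZMod (p := p)) := by
    obtain ⟨g, hg⟩ := red_surj H
    exact (mem_lifts _).mpr ⟨g, hg⟩
  exact exists_degree_eq_of_mem_lifts this

theorem lift_crit (H : (ZMod p)[X]) : ∃ L : ℤ_[p][X], red L = H ∧ L.degree = H.degree ∧
    (H ≠ 0 → ∀ B, CritFin (L + C (p : ℤ_[p]) * B) ↔ GoodPair H (red B)) := by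
  by_cases hH : H = 0
  · exact ⟨0, by simp [red, hH], by simp [hH], fun h => absurd hH h⟩
  obtain ⟨h, s, hhs, hs⟩ := sq_mul_sqfree H hH
  obtain ⟨h', rfl, hd1⟩ := lift_deg h
  obtain ⟨s', rfl, hd2⟩ := lift_deg s
  refine ⟨h' ^ 2 * s', ?_, ?_, fun _ B => ?_⟩
  · rw [hhs]; simp [red]
  · rw [hhs]; simp only [degree_mul, degree_pow, hd1, hd2]
  have key : ∀ P : ℤ_[p][X], red P ∣ red h' → ∃ k w, h' = P * k + C (p : ℤ_[p]) * w := by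
    rintro P ⟨k, hk⟩
    obtain ⟨k', rfl⟩ := red_surj k
    refine ⟨k', ?_⟩
    rw [← red_eq_iff, hk]
    simp [red]
  constructor
  · rintro hc P hP hP2 ⟨b, hb⟩
    obtain ⟨P', rfl⟩ := red_surj P
    obtain ⟨b', rfl⟩ := red_surj b
    rw [hhs] at hP2
    obtain ⟨k, w, hkw⟩ := key P' (dvd_of_sq_dvd hP hs hP2)
    obtain ⟨t, ht⟩ : ∃ t, B = P' * b' + C (p : ℤ_[p]) * t := by
      rw [← red_eq_iff, hb]; simp [red]
    refine hc P' hP ⟨w ^ 2 * s' + t, 2 * k * w * s' + b', k ^ 2 * s', ?_⟩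
    rw [hkw, ht]; ring
  · rintro hg P hP ⟨A, B', D, hf⟩
    have hP2 : red P ^ 2 ∣ H := by
      refine ⟨red D, ?_⟩
      have := congrArg red hf
      rw [hhs]
      simpa [red] using this
    have hP2' := hP2
    rw [hhs] at hP2'
    obtain ⟨k, w, hkw⟩ := key P (dvd_of_sq_dvd hP hs hP2')
    have hE : ∃ E, D - k ^ 2 * s' = C (p : ℤ_[p]) * E := by
      rw [← red_eq_zero_iff]
      have h1 : P ^ 2 * (D - k ^ 2 * s') = C (p : ℤ_[p]) *
          (B + (2 * P * k * w * s' + C (p : ℤ_[p]) * w ^ 2 * s') - P * B' - C (p : ℤ_[p]) * A) := by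
        rw [hkw] at hf
        linear_combination -hf
      have h2 := (red_eq_zero_iff _).mpr ⟨_, h1⟩
      rw [red, Polynomial.map_mul, mul_eq_zero] at h2
      refine h2.resolve_left ?_
      rw [Polynomial.map_pow]
      exact pow_ne_zero _ hP.ne_zero
    obtain ⟨E, hE⟩ := hE
    have hB : B = P * (P * E + B' - 2 * k * w * s') + C (p : ℤ_[p]) * (A - w ^ 2 * s') := by
      apply mul_left_cancel₀ (prime_Cp (p := p)).ne_zero
      rw [hkw] at hf
      linear_combination hf + P ^ 2 * hE
    refine hg (red P) hP hP2 ⟨red (P * E + B' - 2 * k * w * s'), ?_⟩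
    conv_lhs => rw [hB]
    simp [red]

theorem redForm_eq {n : ℕ} {c : ℕ → ℤ_[p]} : redForm p n c = (red (fp n c)).homogenize n := by
  rw [redForm, fp, red, Polynomial.map_sum, homogenize_finsetSum]
  refine Finset.sum_congr rfl fun i hi => ?_
  rw [Finset.mem_range] at hi
  rw [Polynomial.map_mul, Polynomial.map_pow, map_C, map_X, homogenize_C_mul,
    homogenize_X_pow (by omega), show n - (n - i) = i by omega, mul_assoc]

theorem fp_natDegree_le {n : ℕ} {c : ℕ → ℤ_[p]} : (red (fp n c)).natDegree ≤ n := by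
  rw [natDegree_le_iff_coeff_eq_zero]
  intro N hN
  rw [coeff_map, fp_coeff, if_neg (by omega), map_zero]

theorem squareful_iff {n : ℕ} {c : ℕ → ℤ_[p]} (hd : (red (fp n c)).degree < n)
    (h0 : red (fp n c) ≠ 0) : SquarefulP p n c ↔ SqC (red (fp n c)) := by
  rw [SquarefulP, redForm_eq]
  constructor
  · rintro ⟨κ, e, d, H, -, -, -, h⟩
    have := congrArg (MvPolynomial.aeval ![(X : (ZMod p)[X]), 1]) h
    rw [aeval_homogenize_X_one _ fp_natDegree_le] at this
    refine ⟨κ, MvPolynomial.aeval ![(X : (ZMod p)[X]), 1] H, κ.ne_zero, ?_⟩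
    rw [this]
    simp
  · rintro ⟨a, G, ha, h⟩
    have hG : G ≠ 0 := by rintro rfl; apply h0; rw [h]; simp
    have hl : G.leadingCoeff ≠ 0 := leadingCoeff_ne_zero.mpr hG
    have hnd : (red (fp n c)).natDegree < n := (natDegree_lt_iff_degree_lt h0).mpr hd
    have hnd' : 2 * G.natDegree < n := by
      rwa [h, natDegree_C_mul ha, natDegree_pow] at hnd
    refine ⟨Units.mk0 (a * G.leadingCoeff ^ 2) (mul_ne_zero ha (pow_ne_zero _ hl)),
      n - 2 * G.natDegree, G.natDegree, (C G.leadingCoeff⁻¹ * G).homogenize G.natDegree,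
      by omega, isHomogeneous_homogenize _, ?_, ?_⟩
    · rw [coeff_homogenize]
      simp
      exact inv_mul_cancel₀ hl
    · have hd1 : (C G.leadingCoeff⁻¹ * G).natDegree ≤ G.natDegree := natDegree_C_mul_le _ _
      have e1 : red (fp n c) = C (a * G.leadingCoeff ^ 2) *
          (1 * ((C G.leadingCoeff⁻¹ * G) * (C G.leadingCoeff⁻¹ * G))) := by
        rw [h, C_mul, C_pow]
        have : C G.leadingCoeff * C G.leadingCoeff⁻¹ = 1 := by
          rw [← C_mul, mul_inv_cancel₀ hl, C_1]
        linear_combination (- C a * G ^ 2 * (C G.leadingCoeff * C G.leadingCoeff⁻¹ + 1)) * this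
      rw [e1, homogenize_C_mul]
      conv_lhs => rw [show n = (n - 2 * G.natDegree) + (G.natDegree + G.natDegree) by omega]
      rw [homogenize_mul _ _ (by simp) (natDegree_mul_le_of_le hd1 hd1),
        homogenize_mul _ _ hd1 hd1, homogenize_one, Units.val_mk0]
      ring

end

section
variable {p : ℕ} [Fact p.Prime] {n : ℕ}

/-- The part of degree `< n` of the polynomial with lower coefficients `v`. -/
def low (v : Fin n → ℤ_[p]) : ℤ_[p][X] := ∑ i : Fin n, C (v i) * X ^ (n - 1 - (i : ℕ))

theorem low_coeff (v : Fin n → ℤ_[p]) (t : ℕ) :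
    (low v).coeff t = if h : t < n then v ⟨n - 1 - t, by omega⟩ else 0 := by
  simp only [low, finsetSum_coeff, coeff_C_mul, coeff_X_pow]
  split_ifs with h
  · rw [Finset.sum_eq_single ⟨n - 1 - t, by omega⟩]
    · rw [if_pos (by simp; omega), mul_one]
    · intro b _ hne
      rw [if_neg, mul_zero]
      intro hh
      apply hne
      ext
      simp
      omega
    · simp
  · refine Finset.sum_eq_zero fun i _ => ?_
    rw [if_neg (by omega), mul_zero]

theorem low_degree (v : Fin n → ℤ_[p]) : (low v).degree < n := by
  rw [degree_lt_iff_coeff_zero]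
  intro t ht
  rw [low_coeff, dif_neg (by omega)]

theorem low_sub (v w : Fin n → ℤ_[p]) : low (v - w) = low v - low w := by
  simp [low, sub_mul, Finset.sum_sub_distrib]

theorem low_surj (q : ℤ_[p][X]) (hq : q.degree < n) : ∃ v : Fin n → ℤ_[p], low v = q := by
  refine ⟨fun i => q.coeff (n - 1 - i), ?_⟩
  ext t
  rw [low_coeff]
  split_ifs with h
  · simp only
    congr 1; omega
  · exact ((degree_lt_iff_coeff_zero _ _).mp hq t (by omega)).symm

theorem fp_consF0 (f0 : ℤ_[p]) (v : Fin n → ℤ_[p]) :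
    fp n (consF0 p n f0 v) = C f0 * X ^ n + low v := by
  ext t
  rw [fp_coeff, coeff_add, low_coeff, coeff_C_mul, coeff_X_pow]
  by_cases h : t < n
  · rw [if_pos h.le, if_neg (by omega), dif_pos h, consF0, if_neg (by omega), dif_pos (by omega)]
    simp only [mul_zero, zero_add]
    congr 1; ext; simp; omega
  · rw [dif_neg h]
    by_cases h2 : t = n
    · subst h2; simp [consF0]
    · rw [if_neg (by omega), if_neg (by omega)]; simp

/-- the subgroup of vectors divisible by `p^2` -/
def Dset (p n : ℕ) [Fact p.Prime] : Set (Fin n → ℤ_[p]) := {v | ∀ i, (p : ℤ_[p]) ^ 2 ∣ v i}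

theorem mem_Dset (v : Fin n → ℤ_[p]) :
    v ∈ Dset p n ↔ ∃ t, low v = C (p : ℤ_[p]) ^ 2 * t := by
  change _ ↔ C (p : ℤ_[p]) ^ 2 ∣ low v
  rw [← C_pow, C_dvd_iff_dvd_coeff]
  constructor
  · intro h t
    rw [low_coeff]
    split_ifs
    · exact h _
    · exact dvd_zero _
  · intro h i
    have := h (n - 1 - i)
    rw [low_coeff, dif_pos (by omega)] at this
    convert this using 2
    ext; simp; omega

theorem isOpen_Dset : IsOpen (Dset p n) := by
  have h1 : IsOpen {a : ℤ_[p] | (p : ℤ_[p]) ^ 2 ∣ a} := by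
    have : {a : ℤ_[p] | (p : ℤ_[p]) ^ 2 ∣ a} = Metric.closedBall 0 ((p : ℝ) ^ (-(2 : ℕ) : ℤ)) := by
      ext a
      rw [Metric.mem_closedBall, dist_zero_right, PadicInt.norm_le_pow_iff_mem_span_pow,
        Ideal.mem_span_singleton]
      rfl
    rw [this]
    refine IsUltrametricDist.isOpen_closedBall _ ?_
    exact zpow_ne_zero _ (by exact_mod_cast (Fact.out : p.Prime).ne_zero)
  have : Dset p n = ⋂ i : Fin n, (fun v : Fin n → ℤ_[p] => v i) ⁻¹' {a | (p : ℤ_[p]) ^ 2 ∣ a} := by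
    ext v; simp [Dset]
  rw [this]
  exact isOpen_iInter_of_finite fun i => h1.preimage (continuous_apply i)

instance : (haarP p n).IsAddHaarMeasure := by unfold haarP; infer_instance

/-- lifting of residue polynomials, as in `lift_crit` -/
def Lf (H : (ZMod p)[X]) : ℤ_[p][X] := (lift_crit H).choose

theorem Lf_red (H : (ZMod p)[X]) : red (Lf H) = H := (lift_crit H).choose_spec.1
theorem Lf_degree (H : (ZMod p)[X]) : (Lf H).degree = H.degree := (lift_crit H).choose_spec.2.1
theorem Lf_crit (H : (ZMod p)[X]) (hH : H ≠ 0) (B) :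
    CritFin (Lf H + C (p : ℤ_[p]) * B) ↔ GoodPair H (red B) := (lift_crit H).choose_spec.2.2 hH B

/-- The cell of vectors with given residue data. -/
def Ecell (n : ℕ) (x : (ZMod p)[X] × (ZMod p)[X]) : Set (Fin n → ℤ_[p]) :=
  {v | ∃ B, low v = Lf x.1 + C (p : ℤ_[p]) * B ∧ red B = x.2}

theorem Ecell_disj {x y : (ZMod p)[X] × (ZMod p)[X]} {v : Fin n → ℤ_[p]} (hx : v ∈ Ecell n x)
    (hy : v ∈ Ecell n y) : x = y := by
  obtain ⟨B, h1, h2⟩ := hx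
  obtain ⟨B', h3, h4⟩ := hy
  have e1 : x.1 = y.1 := by
    have := congrArg red (h1.symm.trans h3)
    simpa [red, Lf_red] using this
  have e2 : B = B' := by
    rw [e1] at h1
    apply mul_left_cancel₀ (prime_Cp (p := p)).ne_zero
    linear_combination h3 - h1
  exact Prod.ext e1 (by rw [← h2, ← h4, e2])

theorem Ecell_cover (v : Fin n → ℤ_[p]) : ∃ x : (ZMod p)[X] × (ZMod p)[X],
    x.1.degree < n ∧ x.2.degree < n ∧ v ∈ Ecell n x := by
  have hH : (red (low v)).degree < n := degree_map_le.trans_lt (low_degree v)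
  obtain ⟨B, hB⟩ := (red_eq_iff (low v) (Lf (red (low v)))).mp (Lf_red _).symm
  refine ⟨(red (low v), red B), hH, ?_, B, hB, rfl⟩
  refine degree_map_le.trans_lt ?_
  rw [degree_lt_iff_coeff_zero]
  intro t ht
  have h1 := (degree_lt_iff_coeff_zero _ _).mp (low_degree v) t ht
  have h2 := (degree_lt_iff_coeff_zero _ _).mp ((Lf_degree _).trans_lt hH) t ht
  rw [hB, coeff_add, h2, zero_add, coeff_C_mul] at h1
  exact (mul_eq_zero.mp h1).resolve_left PadicInt.prime_p.ne_zero

theorem Ecell_eq (x : (ZMod p)[X] × (ZMod p)[X]) (h1 : x.1.degree < n) (h2 : x.2.degree < n) :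
    ∃ v0 : Fin n → ℤ_[p], Ecell n x = (fun v => -v0 + v) ⁻¹' Dset p n := by
  obtain ⟨b, hb, hbd⟩ := lift_deg x.2
  obtain ⟨v0, hv0⟩ := low_surj (n := n) (Lf x.1 + C (p : ℤ_[p]) * b) (by
    refine (degree_add_le _ _).trans_lt (max_lt ?_ ?_)
    · rwa [Lf_degree]
    · rw [degree_C_mul PadicInt.prime_p.ne_zero, hbd]
      exact h2)
  refine ⟨v0, ?_⟩
  ext v
  rw [Set.mem_preimage, neg_add_eq_sub, mem_Dset, low_sub, hv0]
  constructor
  · rintro ⟨B, hB, hB2⟩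
    obtain ⟨t, ht⟩ := (red_eq_iff B b).mp (hB2.trans hb.symm)
    exact ⟨t, by rw [hB, ht]; ring⟩
  · rintro ⟨t, ht⟩
    refine ⟨b + C (p : ℤ_[p]) * t, by linear_combination ht, ?_⟩
    rw [← hb]; simp [red]

theorem Ecell_measure (x : (ZMod p)[X] × (ZMod p)[X]) (h1 : x.1.degree < n) (h2 : x.2.degree < n) :
    haarP p n (Ecell n x) = haarP p n (Dset p n) ∧ MeasurableSet (Ecell n x) := by
  obtain ⟨v0, h⟩ := Ecell_eq x h1 h2
  rw [h]
  refine ⟨measure_preimage_add _ _ _, ?_⟩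
  exact (isOpen_Dset.preimage (by fun_prop)).measurableSet

theorem measure_cells {ι : Type} [Finite ι] (f : ι → (ZMod p)[X] × (ZMod p)[X])
    (hf : Function.Injective f) (h1 : ∀ i, (f i).1.degree < n) (h2 : ∀ i, (f i).2.degree < n) :
    (haarP p n (⋃ i, Ecell n (f i))).toReal = Nat.card ι * (haarP p n (Dset p n)).toReal := by
  have : Fintype ι := Fintype.ofFinite ι
  rw [measure_iUnion]
  · rw [tsum_fintype, Finset.sum_congr rfl fun i _ => (Ecell_measure (f i) (h1 i) (h2 i)).1]
    simp
  · intro i j hij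
    rw [Function.onFun, Set.disjoint_left]
    intro v hv hv'
    exact hij (hf (Ecell_disj hv hv'))
  · exact fun i => (Ecell_measure (f i) (h1 i) (h2 i)).2

theorem Dset_pos : (haarP p n (Dset p n)).toReal ≠ 0 := by
  have h1 : haarP p n (Dset p n) ≠ 0 :=
    (isOpen_Dset.measure_pos _ ⟨0, fun i => dvd_zero _⟩).ne'
  have h2 : haarP p n (Dset p n) ≠ ⊤ := by
    refine (lt_of_le_of_lt (measure_mono (Set.subset_univ _)) ?_).ne
    exact isCompact_univ.measure_lt_top
  exact ENNReal.toReal_ne_zero.mpr ⟨h1, h2⟩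

theorem cell_iff (hn : 3 ≤ n) {f0 : ℤ_[p]} (hf0 : f0 ≠ 0) {g0 : ℤ_[p]} (hg0 : f0 = p * g0)
    {x : (ZMod p)[X] × (ZMod p)[X]} (hx : x.1.degree < n) {v : Fin n → ℤ_[p]}
    (hv : v ∈ Ecell n x) :
    ((SepDegP p n (consF0 p n f0 v) ∧ PrimP p n (consF0 p n f0 v) ∧
        IsMaxOrder ℤ_[p] ℚ_[p] n (consF0 p n f0 v)) ↔
      (x.1 ≠ 0 ∧ ((p : ℤ_[p]) ^ 2 ∣ f0 → x.1.natDegree = n - 1) ∧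
        GoodPair x.1 (x.2 + C (PadicInt.toZMod g0) * X ^ n))) ∧
    (x.1 ≠ 0 → (SquarefulP p n (consF0 p n f0 v) ↔ SqC x.1)) := by
  obtain ⟨B, hB, hB2⟩ := hv
  have hfp : fp n (consF0 p n f0 v) = Lf x.1 + C (p : ℤ_[p]) * (B + C g0 * X ^ n) := by
    rw [fp_consF0, hB, hg0, C_mul]; ring
  have hred : red (fp n (consF0 p n f0 v)) = x.1 := by
    rw [hfp]
    conv_rhs => rw [← Lf_red x.1]
    simp [red]
  have hredl : red (low v) = x.1 := by
    rw [hB]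
    conv_rhs => rw [← Lf_red x.1]
    simp [red]
  have hprim : PrimP p n (consF0 p n f0 v) ↔ x.1 ≠ 0 := by
    rw [← hred]
    constructor
    · exact red_fp_ne
    · intro h
      by_contra hh
      apply h
      ext t
      rw [coeff_map, fp_coeff, coeff_zero]
      split_ifs with h1
      · rw [toZMod_eq_zero_iff]
        by_contra h2
        exact hh ⟨n - t, by omega, (isUnit_iff_not_dvd _).mpr h2⟩
      · simp
  refine ⟨?_, ?_⟩
  · rw [max_iff hn (by simpa [consF0] using hf0), hprim]
    refine and_congr_right fun hne => ?_
    rw [hfp, Lf_crit _ hne, and_comm]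
    refine and_congr ?_ ?_
    · rw [CritInf, not_and]
      have e0 : consF0 p n f0 v 0 = f0 := by simp [consF0]
      rw [e0]
      refine imp_congr_right fun _ => ?_
      have e1 : (red (low v)).coeff (n - 1) = PadicInt.toZMod (consF0 p n f0 v 1) := by
        rw [coeff_map, low_coeff, dif_pos (by omega), consF0, if_neg (by omega),
          dif_pos (by omega)]
        congr 3
        omega
      rw [← toZMod_eq_zero_iff, ← e1, hredl]
      constructor
      · intro h
        refine natDegree_eq_of_le_of_coeff_ne_zero ?_ h
        have := (natDegree_lt_iff_degree_lt hne).mpr hx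
        omega
      · intro h
        rw [← h, coeff_natDegree]
        exact leadingCoeff_ne_zero.mpr hne
    · rw [← hB2]; simp [red]
  · intro hne
    rw [squareful_iff (by rw [hred]; exact hx) (by rw [hred]; exact hne), hred]

theorem final (hn : 3 ≤ n) (hodd : Odd n)
    (f0 : ℤ_[p]) (hf0 : f0 ≠ 0) (hval : Odd f0.valuation) :
    densIn p n
      {v | SepDegP p n (consF0 p n f0 v) ∧ PrimP p n (consF0 p n f0 v) ∧
        IsMaxOrder ℤ_[p] ℚ_[p] n (consF0 p n f0 v) ∧ SquarefulP p n (consF0 p n f0 v)}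
      {v | SepDegP p n (consF0 p n f0 v) ∧ PrimP p n (consF0 p n f0 v) ∧
        IsMaxOrder ℤ_[p] ℚ_[p] n (consF0 p n f0 v)} =
      ((p : ℝ) ^ ((n - 1) / 2))⁻¹ * (1 + (p : ℝ)⁻¹)⁻¹ := by
  obtain ⟨g0, hg0⟩ : (p : ℤ_[p]) ∣ f0 := by
    rw [PadicInt.unitCoeff_spec hf0]
    exact (dvd_pow_self _ hval.pos.ne').mul_left _
  set A : ℕ → Prop := fun d => (p : ℤ_[p]) ^ 2 ∣ f0 → d = n - 1 with hAdef
  have hA : (∀ d, A d) ∨ (∀ d, A d ↔ d = n - 1) := by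
    by_cases h : (p : ℤ_[p]) ^ 2 ∣ f0
    · right; intro d; simp [hAdef, h]
    · left; intro d h'; exact absurd h' h
  set c0 : (ZMod p)[X] := C (PadicInt.toZMod g0) * X ^ n with hc0
  have hfinite : ∀ Cd : (ZMod p)[X] → Prop, Finite (TP (ZMod p) Cd A n c0) := by
    intro Cd
    have := finite_LT (k := ZMod p) n
    refine Finite.of_injective (β := {B : (ZMod p)[X] // B.degree < n} ×
      {B : (ZMod p)[X] // B.degree < n})
      (fun x => (⟨x.1.1, x.2.2.1⟩, ⟨x.1.2, x.2.2.2.2.2.1⟩)) ?_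
    rintro ⟨⟨x1, x2⟩, hx⟩ ⟨⟨y1, y2⟩, hy⟩ h
    simp at h
    simpa using h
  have key : ∀ Cd : (ZMod p)[X] → Prop,
      (haarP p n (⋃ i : TP (ZMod p) Cd A n c0, Ecell n i.1)).toReal =
        Nat.card (TP (ZMod p) Cd A n c0) * (haarP p n (Dset p n)).toReal := by
    intro Cd
    have := hfinite Cd
    exact measure_cells (fun i : TP (ZMod p) Cd A n c0 => i.1) Subtype.val_injective
      (fun i => i.2.2.1) (fun i => i.2.2.2.2.2.1)
  have e1 : {v | SepDegP p n (consF0 p n f0 v) ∧ PrimP p n (consF0 p n f0 v) ∧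
        IsMaxOrder ℤ_[p] ℚ_[p] n (consF0 p n f0 v) ∧ SquarefulP p n (consF0 p n f0 v)} =
      ⋃ i : TP (ZMod p) SqC A n c0, Ecell n i.1 := by
    ext v
    rw [Set.mem_iUnion]
    constructor
    · rintro ⟨h1, h2, h3, h4⟩
      obtain ⟨x, hx1, hx2, hx⟩ := Ecell_cover v
      obtain ⟨q1, q2⟩ := cell_iff hn hf0 hg0 hx1 hx
      obtain ⟨r1, r2, r3⟩ := q1.mp ⟨h1, h2, h3⟩
      exact ⟨⟨x, r1, hx1, r2, (q2 r1).mp h4, hx2, r3⟩, hx⟩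
    · rintro ⟨⟨x, r1, hx1, r2, r4, hx2, r3⟩, hx⟩
      obtain ⟨q1, q2⟩ := cell_iff hn hf0 hg0 hx1 hx
      obtain ⟨h1, h2, h3⟩ := q1.mpr ⟨r1, r2, r3⟩
      exact ⟨h1, h2, h3, (q2 r1).mpr r4⟩
  have e2 : {v | SepDegP p n (consF0 p n f0 v) ∧ PrimP p n (consF0 p n f0 v) ∧
        IsMaxOrder ℤ_[p] ℚ_[p] n (consF0 p n f0 v)} =
      ⋃ i : TP (ZMod p) (fun _ => True) A n c0, Ecell n i.1 := by
    ext v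
    rw [Set.mem_iUnion]
    constructor
    · intro h
      obtain ⟨x, hx1, hx2, hx⟩ := Ecell_cover v
      obtain ⟨r1, r2, r3⟩ := (cell_iff hn hf0 hg0 hx1 hx).1.mp h
      exact ⟨⟨x, r1, hx1, r2, trivial, hx2, r3⟩, hx⟩
    · rintro ⟨⟨x, r1, hx1, r2, _hT, hx2, r3⟩, hx⟩
      exact (cell_iff hn hf0 hg0 hx1 hx).1.mpr ⟨r1, r2, r3⟩
  rw [densIn, e1, e2, key, key, mul_div_mul_right _ _ Dset_pos,
    count_final n hn hodd A hA c0, ZMod.card]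

end

/-- Theorem 3.9: for odd `n` and `v_p(f_0)` odd, the density of
squareful forms within `F_{n,max}(f_0, ℤ_p)` equals `p^{(1-n)/2}·(1 + p^{-1})^{-1}`. -/
theorem squareful_density
    (p : ℕ) [Fact p.Prime]
    (n : ℕ) (hn : 3 ≤ n) (hodd : Odd n)
    (f0 : ℤ_[p]) (hf0 : f0 ≠ 0) (hval : Odd f0.valuation) :
    densIn p n
      {v | SepDegP p n (consF0 p n f0 v) ∧ PrimP p n (consF0 p n f0 v) ∧
        IsMaxOrder ℤ_[p] ℚ_[p] n (consF0 p n f0 v) ∧ SquarefulP p n (consF0 p n f0 v)}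
      {v | SepDegP p n (consF0 p n f0 v) ∧ PrimP p n (consF0 p n f0 v) ∧
        IsMaxOrder ℤ_[p] ℚ_[p] n (consF0 p n f0 v)} =
      ((p : ℝ) ^ ((n - 1) / 2))⁻¹ * (1 + (p : ℝ)⁻¹)⁻¹ := by
  exact final hn hodd f0 hf0 hval

end BHS
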